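/- arXiv:2112.10268 — 2 statements merged into one kernel-verified Lean document; each statement's English description precedes it below -/
import Mathlib

section
/- In the field F_{2^6} (the finite field with 64 elements, an extension of F_2), there is no nonzero element ξ such that Tr(ξ) = 0, Tr(ξ^{-1}) = 0, and ξ + ξ^{-1} is a primitive element of F_{2^6}. -/
/-!
Write `s = ξ + ξ⁸` and `N = ξ ξ⁸` for the trace and norm of `ξ` over `F₈`, so that `ξ⁻¹` has trace
`r = s / N` over `F₈`. By transitivity of the trace, `s` and `r` have absolute trace `0` in `F₈`.
If `s ≠ 0`, both are roots of `X³ + X + 1`, so `r` is one of `s`, `s²`, `s⁴`. On the other hand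
`ξ / s` is a root of `X² + X + N / s²` outside `F₈`, so `N / s² = (s r)⁻¹` has absolute trace `1`,
which excludes `r = s²` and `r = s⁴`. Hence `r = s` in all cases, that is, `ξ + ξ⁻¹` lies in `F₈`
and its order divides `7`.
-/

open Finset

theorem algebraMap_trace_eq_sum_add_pow_card_pow (K L : Type*) [Field K] [Fintype K] [Field L]
    [Finite L] [Algebra K L] {n : ℕ} (hn : Module.finrank K L = n + n) (x : L) :
    algebraMap K L (Algebra.trace K L x) =
      ∑ i ∈ range n, (x + x ^ Fintype.card K ^ n) ^ Fintype.card K ^ i := by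
  have add_pow_card_pow (i : ℕ) (a b : L) :
      (a + b) ^ Fintype.card K ^ i = a ^ Fintype.card K ^ i + b ^ Fintype.card K ^ i := by
    simpa only [AlgHom.coe_pow, FiniteField.coe_frobeniusAlgHom, pow_iterate] using
      map_add (FiniteField.frobeniusAlgHom K L ^ i) a b
  rw [FiniteField.algebraMap_trace_eq_sum_pow, Nat.card_eq_fintype_card, hn, sum_range_add,
    ← sum_add_distrib]
  refine sum_congr rfl fun i _ => ?_
  rw [add_pow_card_pow, ← pow_mul, ← pow_add]

theorem finrank_eq_of_card_eq_card_pow {K V : Type*} [Field K] [Fintype K] [AddCommGroup V]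
    [Fintype V] [Module K V] {n : ℕ} (hV : Fintype.card V = Fintype.card K ^ n) :
    Module.finrank K V = n :=
  Nat.pow_right_injective Fintype.one_lt_card (Module.card_eq_pow_finrank.symm.trans hV)

theorem cubic_eq_zero_of_sum_pow_two_pow_eq_zero {R : Type*} [CommRing R] [IsDomain R]
    {s : R} (hs₀ : s ≠ 0) (hs : ∑ i ∈ range 3, s ^ 2 ^ i = 0) : s ^ 3 + s + 1 = 0 := by
  refine mul_left_cancel₀ hs₀ ?_
  simp only [sum_range_succ, sum_range_zero] at hs
  linear_combination hs

section CommRing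

variable {R : Type*} [CommRing R] [CharP R 2]

theorem sum_sq_add_self_pow_two_pow (t : R) (n : ℕ) :
    ∑ i ∈ range n, (t ^ 2 + t) ^ 2 ^ i = t ^ 2 ^ n + t := by
  induction n with
  | zero => simp [CharTwo.add_self_eq_zero]
  | succ n ih =>
    rw [sum_range_succ, ih, add_pow_char_pow, ← pow_mul, ← pow_succ']
    linear_combination t ^ 2 ^ n * CharTwo.two_eq_zero (R := R)

theorem pow_seven_eq_one_of_cubic {s : R} (hs : s ^ 3 + s + 1 = 0) : s ^ 7 = 1 := by
  have two_eq_zero : (2 : R) = 0 := CharTwo.two_eq_zero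
  linear_combination (s ^ 4 - s ^ 2 - s + 1) * hs + (s ^ 2 - 1) * two_eq_zero

theorem eq_or_eq_sq_or_eq_pow_four_of_cubic [IsDomain R] {s r : R} (hs : s ^ 3 + s + 1 = 0)
    (hr : r ^ 3 + r + 1 = 0) : r = s ∨ r = s ^ 2 ∨ r = s ^ 4 := by
  have two_eq_zero : (2 : R) = 0 := CharTwo.two_eq_zero
  have factorization : (r - s) * ((r - s ^ 2) * (r - s ^ 4)) = 0 := by
    linear_combination hr + (-s * r ^ 2 + r * (s ^ 3 + s ^ 2 - s - 1)) * hs -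
      pow_seven_eq_one_of_cubic hs + (r * s - 1) * two_eq_zero
  simpa only [mul_eq_zero, sub_eq_zero] using factorization

end CommRing

section Field

variable {F : Type*} [Field F] [CharP F 2]

-- Artin–Schreier: the element is `t ^ 2 + t` for `t = ξ / (ξ + ξ ^ 2 ^ n)`, so the sum telescopes.
theorem sum_norm_div_trace_sq_pow_two_pow {n : ℕ} {ξ : F} (hξ : ξ ^ 2 ^ (n + n) = ξ)
    (hs : ξ + ξ ^ 2 ^ n ≠ 0) :
    ∑ i ∈ range n, (ξ * ξ ^ 2 ^ n / (ξ + ξ ^ 2 ^ n) ^ 2) ^ 2 ^ i = 1 := by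
  set η := ξ ^ 2 ^ n with hη
  have hηξ : η ^ 2 ^ n = ξ := by rw [hη, ← pow_mul, ← pow_add, hξ]
  have artin_schreier : ξ * η / (ξ + η) ^ 2 = (ξ / (ξ + η)) ^ 2 + ξ / (ξ + η) := by
    field_simp
    linear_combination -ξ ^ 2 * CharTwo.two_eq_zero (R := F)
  rw [artin_schreier, sum_sq_add_self_pow_two_pow, div_pow, add_pow_char_pow, ← hη, hηξ,
    add_comm η ξ, ← add_div, add_comm η ξ, div_self hs]

theorem eq_of_sum_pow_two_pow_eq_zero_of_sum_inv_mul_eq_one {s r : F} (hs₀ : s ≠ 0) (hr₀ : r ≠ 0)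
    (hs : ∑ i ∈ range 3, s ^ 2 ^ i = 0) (hr : ∑ i ∈ range 3, r ^ 2 ^ i = 0)
    (hsr : ∑ i ∈ range 3, (s * r)⁻¹ ^ 2 ^ i = 1) : r = s := by
  have hs_cubic := cubic_eq_zero_of_sum_pow_two_pow_eq_zero hs₀ hs
  have hs_seven := pow_seven_eq_one_of_cubic hs_cubic
  have hr_cubic := cubic_eq_zero_of_sum_pow_two_pow_eq_zero hr₀ hr
  have frobenius_sum_eq_zero (k : ℕ) : ∑ i ∈ range 3, (s ^ 2 ^ k) ^ 2 ^ i = 0 := by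
    simp_rw [pow_right_comm s (2 ^ k), ← sum_pow_char_pow, hs]
    simp
  rcases eq_or_eq_sq_or_eq_pow_four_of_cubic hs_cubic hr_cubic with rfl | rfl | rfl
  · rfl
  · have hinv : (s * s ^ 2)⁻¹ = s ^ 2 ^ 2 :=
      inv_eq_of_mul_eq_one_left (by linear_combination hs_seven)
    rw [hinv, frobenius_sum_eq_zero] at hsr
    exact absurd hsr zero_ne_one
  · have hinv : (s * s ^ 4)⁻¹ = s ^ 2 ^ 1 :=
      inv_eq_of_mul_eq_one_left (by linear_combination hs_seven)
    rw [hinv, frobenius_sum_eq_zero] at hsr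
    exact absurd hsr zero_ne_one

theorem inv_add_inv_pow_eight_eq_add_pow_eight {ξ : F} (hξ₀ : ξ ≠ 0) (hξ : ξ ^ 2 ^ (3 + 3) = ξ)
    (htr : ∑ i ∈ range 3, (ξ + ξ ^ 2 ^ 3) ^ 2 ^ i = 0)
    (htr_inv : ∑ i ∈ range 3, (ξ⁻¹ + ξ⁻¹ ^ 2 ^ 3) ^ 2 ^ i = 0) :
    ξ⁻¹ + ξ⁻¹ ^ 2 ^ 3 = ξ + ξ ^ 2 ^ 3 := by
  have inv_trace_eq_div : ξ⁻¹ + ξ⁻¹ ^ 2 ^ 3 = (ξ + ξ ^ 2 ^ 3) / (ξ * ξ ^ 2 ^ 3) := by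
    rw [inv_pow, inv_add_inv hξ₀ (pow_ne_zero _ hξ₀)]
  by_cases hs₀ : ξ + ξ ^ 2 ^ 3 = 0
  · rw [inv_trace_eq_div, hs₀, zero_div]
  have hr₀ : ξ⁻¹ + ξ⁻¹ ^ 2 ^ 3 ≠ 0 := by
    rw [inv_trace_eq_div]
    exact div_ne_zero hs₀ (mul_ne_zero hξ₀ (pow_ne_zero _ hξ₀))
  have inv_mul_eq : ((ξ + ξ ^ 2 ^ 3) * (ξ⁻¹ + ξ⁻¹ ^ 2 ^ 3))⁻¹ =
      ξ * ξ ^ 2 ^ 3 / (ξ + ξ ^ 2 ^ 3) ^ 2 := by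
    rw [inv_trace_eq_div, ← mul_div_assoc, inv_div, sq]
  refine eq_of_sum_pow_two_pow_eq_zero_of_sum_inv_mul_eq_one hs₀ hr₀ htr htr_inv ?_
  rw [inv_mul_eq]
  exact sum_norm_div_trace_sq_pow_two_pow hξ hs₀

end Field

theorem add_inv_pow_eight_eq_self {E : Type*} [Field E] [Fintype E] [Algebra (ZMod 2) E]
    (hE : Fintype.card E = 64) {ξ : E} (hξ₀ : ξ ≠ 0) (htr : Algebra.trace (ZMod 2) E ξ = 0)
    (htr_inv : Algebra.trace (ZMod 2) E ξ⁻¹ = 0) : (ξ + ξ⁻¹) ^ 8 = ξ + ξ⁻¹ := by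
  have : CharP E 2 := charP_of_injective_algebraMap (algebraMap (ZMod 2) E).injective 2
  have hrank : Module.finrank (ZMod 2) E = 3 + 3 :=
    finrank_eq_of_card_eq_card_pow (by rw [hE, ZMod.card]; norm_num)
  have relative_trace_sum_eq_zero {x : E} (hx : Algebra.trace (ZMod 2) E x = 0) :
      ∑ i ∈ range 3, (x + x ^ 2 ^ 3) ^ 2 ^ i = 0 := by
    have h := algebraMap_trace_eq_sum_add_pow_card_pow (ZMod 2) E hrank x
    rw [hx, map_zero, ZMod.card] at h
    exact h.symm
  have hpow : ξ ^ 2 ^ (3 + 3) = ξ := by simpa [hE] using FiniteField.pow_card ξ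
  have traces_eq := inv_add_inv_pow_eight_eq_add_pow_eight hξ₀ hpow (relative_trace_sum_eq_zero htr)
    (relative_trace_sum_eq_zero htr_inv)
  have frobenius_add : (ξ + ξ⁻¹) ^ 8 = ξ ^ 8 + ξ⁻¹ ^ 8 := add_pow_char_pow (p := 2) (n := 3) ξ ξ⁻¹
  rw [frobenius_add]
  linear_combination traces_eq + (ξ ^ 8 - ξ⁻¹) * CharTwo.two_eq_zero (R := E)

/-- In `F_{2^6}` (the field with 64 elements, an extension of `F_2`) there is no
nonzero `ξ` with `Tr ξ = 0`, `Tr ξ⁻¹ = 0` and `ξ + ξ⁻¹` a primitive element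
(i.e. of multiplicative order `63`). -/
theorem stmt1 (E : Type*) [Field E] [Fintype E] [Algebra (ZMod 2) E]
    (hE : Fintype.card E = 64) :
    ¬ ∃ ξ : E, ξ ≠ 0 ∧ Algebra.trace (ZMod 2) E ξ = 0 ∧
      Algebra.trace (ZMod 2) E ξ⁻¹ = 0 ∧ orderOf (ξ + ξ⁻¹) = 63 := by
  rintro ⟨ξ, hξ₀, htr, htr_inv, horder⟩
  have hne : ξ + ξ⁻¹ ≠ 0 := by
    intro h
    simp [h] at horder
  have hseven : (ξ + ξ⁻¹) ^ 7 = 1 := by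
    refine mul_left_cancel₀ hne ?_
    rw [← pow_succ', add_inv_pow_eight_eq_self hE hξ₀ htr htr_inv, mul_one]
  have hdvd : orderOf (ξ + ξ⁻¹) ∣ 7 := orderOf_dvd_of_pow_eq_one hseven
  rw [horder] at hdvd
  norm_num at hdvd
end

section
/- Let q be a prime power, n a positive integer, a, b elements of F_q, and e a divisor of q^n − 1. Then N_e(a,b) ≥ θ(e)·q^{n/2}·(q^{n/2 − 2} − 2^{ω(e)+2}). -/
/-- A nonzero element `ξ` is `e`-free if the only divisor `d` of `e` for which
`ξ = β ^ d` is solvable is `d = 1`. -/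
def IsFree {E : Type*} [Monoid E] (e : ℕ) (ξ : E) : Prop :=
  ∀ d : ℕ, d ∣ e → (∃ β : E, β ^ d = ξ) → d = 1

/-- `Ncount F E a b e` is the number of nonzero `ξ ∈ E` with `Tr ξ = a`,
`Tr ξ⁻¹ = b` and `ξ + ξ⁻¹` being `e`-free. -/
noncomputable def Ncount (F E : Type*) [Field F] [Field E] [Algebra F E]
    (a b : F) (e : ℕ) : ℕ :=
  Nat.card {ξ : E // ξ ≠ 0 ∧ Algebra.trace F E ξ = a ∧ Algebra.trace F E ξ⁻¹ = b ∧
    IsFree e (ξ + ξ⁻¹)}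

/-!
The `e`-free elements among the `x + x⁻¹`, where `x` runs over the elements with prescribed traces
of `x` and `x⁻¹`, are counted by expanding the indicator of `e`-freeness into multiplicative
characters `χ` and the trace conditions into additive characters `ψ`. The trivial pair gives the
main term; all other pairs are controlled by the Weil bound
`|∑ x, χ (x + x⁻¹) * ψ (U x + V x⁻¹)| ≤ 4 √#E`.

For the Weil bound, the `L`-function of the sum is a polynomial of degree at most `4`, because
adding suitable multiples of `X ^ 2 + 1` to the monic polynomials of a given degree `≥ 5` permutes
them and multiplies their weights by a constant other than `1`. By Newton's identities the sum over
the extension of degree `k` is minus the `k`-th power sum of the inverse roots of this polynomial.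
These sums are `O(#E ^ (k / 2))` for even `k`, by the Stepanov–Bombieri point count on the curve
`y ^ (Q - 1) = x + x⁻¹`, `z ^ Q = z + U x + V x⁻¹` with `Q = #E`, so every inverse root has absolute
value at most `√#E`.
-/

open Polynomial

/-! ### Monomials and pole orders on the Kummer–Artin–Schreier curve -/

section Monomials

/-- The monomial `x ^ i * y ^ a * z ^ b` with exponent vector `t = (i, a, b)`. -/
def monom {B : Type*} [CommMonoid B] (x y z : B) (t : ℕ × ℕ × ℕ) : B :=
  x ^ t.1 * y ^ t.2.1 * z ^ t.2.2

/-- The exponent vectors `(i, a, b)` with `i < N`, `a < d`, `b < P`. -/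
def exponentBox (N d P : ℕ) : Finset (ℕ × ℕ × ℕ) :=
  Finset.range N ×ˢ Finset.range d ×ˢ Finset.range P

/-- The order of the pole of `monom x y z t` when `x`, `y`, `z` have poles of orders `d * P`,
`P` and `d`. -/
def poleOrder (d P : ℕ) (t : ℕ × ℕ × ℕ) : ℕ := d * P * t.1 + P * t.2.1 + d * t.2.2

lemma mem_exponentBox {N d P : ℕ} {t : ℕ × ℕ × ℕ} :
    t ∈ exponentBox N d P ↔ t.1 < N ∧ t.2.1 < d ∧ t.2.2 < P := by
  simp [exponentBox]

lemma card_exponentBox (N d P : ℕ) : (exponentBox N d P).card = N * (d * P) := by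
  simp [exponentBox]

lemma monom_add_nsmul {B : Type*} [CommMonoid B] (x y z : B) (t t' : ℕ × ℕ × ℕ) (s : ℕ) :
    monom x y z (t + s • t') = monom x y z t * monom x y z t' ^ s := by
  simp only [monom, Prod.fst_add, Prod.snd_add, Prod.smul_fst, Prod.smul_snd, smul_eq_mul,
    pow_add, mul_pow, pow_mul']
  ac_rfl

lemma monom_pow {B : Type*} [CommMonoid B] (x y z : B) (t : ℕ × ℕ × ℕ) (s : ℕ) :
    monom x y z t ^ s = monom (x ^ s) (y ^ s) (z ^ s) t := by
  simp only [monom, mul_pow, pow_right_comm _ _ s]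

lemma map_monom {B B' G : Type*} [CommMonoid B] [CommMonoid B'] [FunLike G B B']
    [MonoidHomClass G B B'] (φ : G) (x y z : B) (t : ℕ × ℕ × ℕ) :
    φ (monom x y z t) = monom (φ x) (φ y) (φ z) t := by
  simp only [monom, map_mul, map_pow]

lemma poleOrder_add_nsmul (d P s : ℕ) (t t' : ℕ × ℕ × ℕ) :
    poleOrder d P (t + s • t') = poleOrder d P t + s * poleOrder d P t' := by
  simp only [poleOrder, Prod.fst_add, Prod.snd_add, Prod.smul_fst, Prod.smul_snd, smul_eq_mul]
  ring

lemma poleOrder_inj {d P : ℕ} (hdP : d.Coprime P) {t t' : ℕ × ℕ × ℕ}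
    (hd : t.2.1 < d) (hP : t.2.2 < P) (hd' : t'.2.1 < d) (hP' : t'.2.2 < P)
    (h : poleOrder d P t = poleOrder d P t') : t = t' := by
  obtain ⟨i, a, b⟩ := t
  obtain ⟨i', a', b'⟩ := t'
  simp only [poleOrder] at h hd hP hd' hP'
  have hmod_d : P * a ≡ P * a' [MOD d] := by
    have := congrArg (· % d) h
    simpa [Nat.ModEq, Nat.add_mod, mul_assoc] using this
  have hmod_P : d * b ≡ d * b' [MOD P] := by
    have := congrArg (· % P) h
    simpa [Nat.ModEq, Nat.add_mod, mul_assoc, mul_left_comm d P] using this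
  obtain rfl : a = a' := (hmod_d.cancel_left_of_coprime hdP).eq_of_lt_of_lt hd hd'
  obtain rfl : b = b' := (hmod_P.cancel_left_of_coprime hdP.symm).eq_of_lt_of_lt hP hP'
  have hi : d * P * i = d * P * i' := by omega
  rw [Nat.eq_of_mul_eq_mul_left (Nat.mul_pos (by omega) (by omega)) hi]

lemma poleOrder_lt_of_mem_exponentBox {N d P : ℕ} {t : ℕ × ℕ × ℕ} (ht : t ∈ exponentBox N d P) :
    poleOrder d P t < d * P * (N + 1) := by
  obtain ⟨hi, ha, hb⟩ := mem_exponentBox.mp ht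
  have hPa : P * (t.2.1 + 1) ≤ P * d := Nat.mul_le_mul_left _ ha
  have hdb : d * (t.2.2 + 1) ≤ d * P := Nat.mul_le_mul_left _ hb
  have hdPi : d * P * (t.1 + 1) ≤ d * P * N := Nat.mul_le_mul_left _ hi
  unfold poleOrder
  nlinarith [Nat.zero_lt_of_lt ha, Nat.zero_lt_of_lt hb]

end Monomials

lemma exists_valuation_sum_pow_eq {E Γ ι : Type*} [Field E] [LinearOrderedCommGroupWithZero Γ]
    (v : Valuation E Γ) {γ : Γ} (hγ : 1 < γ) {n : ℕ} (T : Finset ι) (f : ι → E) (g : ι → ℕ)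
    (hf : ∀ i ∈ T, f i ≠ 0 → v (f i) ^ n = γ ^ g i)
    (hinj : ∀ i ∈ T, ∀ j ∈ T, g i = g j → i = j) (hne : ∃ i ∈ T, f i ≠ 0) :
    ∃ j ∈ T, f j ≠ 0 ∧ v (∑ i ∈ T, f i) ^ n = γ ^ g j := by
  classical
  obtain ⟨i₀, hi₀T, hi₀⟩ := hne
  obtain ⟨j, hj, hjmax⟩ := Finset.exists_max_image (T.filter (f · ≠ 0)) g
    ⟨i₀, Finset.mem_filter.mpr ⟨hi₀T, hi₀⟩⟩
  simp only [Finset.mem_filter] at hj hjmax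
  refine ⟨j, hj.1, hj.2, ?_⟩
  rw [Valuation.map_sum_eq_of_lt v hj.1, hf j hj.1 hj.2]
  intro i hi
  simp only [Finset.mem_sdiff, Finset.mem_singleton] at hi
  by_cases hfi : f i = 0
  · rw [hfi, map_zero]
    exact (Valuation.pos_iff v).mpr hj.2
  · have hlt : g i < g j := lt_of_le_of_ne (hjmax i ⟨hi.1, hfi⟩)
      fun hij => hi.2 (hinj i hi.1 j hj.1 hij)
    refine lt_of_pow_lt_pow_left₀ n zero_le ?_
    rw [hf i hi.1 hfi, hf j hj.1 hj.2]
    exact pow_lt_pow_right₀ hγ hlt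

/-- The elements `x`, `y`, `z` of `E` satisfy the equations `y ^ d = x + x⁻¹` (Kummer) and
`z ^ P = z + (U x + V x⁻¹)` (Artin–Schreier), and `v` is a valuation of `E`, trivial on the
constant field `K`, at which `x` has a pole. Coprimality of `d` and `P` makes this pole totally
ramified. -/
structure IsKummerArtinSchreier {K E Γ : Type*} [Field K] [Field E] [Algebra K E]
    [LinearOrderedCommGroupWithZero Γ] (v : Valuation E Γ) (x y z : E) (d P : ℕ) (U V : K) :
    Prop where
  map_const : ∀ c : K, c ≠ 0 → v (algebraMap K E c) = 1
  one_lt_map_x : 1 < v x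
  kummer : y ^ d = x + x⁻¹
  artinSchreier : z ^ P = z + (U • x + V • x⁻¹)
  coeff_ne_zero : U ≠ 0
  d_pos : 0 < d
  one_lt_P : 1 < P
  coprime : d.Coprime P

namespace IsKummerArtinSchreier

variable {K E Γ : Type*} [Field K] [Field E] [Algebra K E] [LinearOrderedCommGroupWithZero Γ]
  {v : Valuation E Γ} {x y z : E} {d P : ℕ} {U V : K}

section Valuation

lemma P_pos (h : IsKummerArtinSchreier v x y z d P U V) : 0 < P :=
  zero_lt_one.trans h.one_lt_P

lemma dP_ne_zero (h : IsKummerArtinSchreier v x y z d P U V) : d * P ≠ 0 :=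
  (Nat.mul_pos h.d_pos h.P_pos).ne'

lemma map_x_ne_zero (h : IsKummerArtinSchreier v x y z d P U V) : v x ≠ 0 :=
  (zero_lt_one.trans h.one_lt_map_x).ne'

lemma x_ne_zero (h : IsKummerArtinSchreier v x y z d P U V) : x ≠ 0 :=
  v.ne_zero_iff.mp h.map_x_ne_zero

lemma map_x_inv_lt_one (h : IsKummerArtinSchreier v x y z d P U V) : v x⁻¹ < 1 := by
  rw [map_inv₀]
  exact inv_lt_one_of_one_lt₀ h.one_lt_map_x

lemma map_const_le_one (h : IsKummerArtinSchreier v x y z d P U V) (c : K) :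
    v (algebraMap K E c) ≤ 1 := by
  rcases eq_or_ne c 0 with rfl | hc
  · simp
  · exact (h.map_const c hc).le

lemma map_smul (h : IsKummerArtinSchreier v x y z d P U V) {c : K} (hc : c ≠ 0) (w : E) :
    v (c • w) = v w := by
  rw [Algebra.smul_def, map_mul, h.map_const c hc, one_mul]

lemma map_smul_le (h : IsKummerArtinSchreier v x y z d P U V) (c : K) (w : E) :
    v (c • w) ≤ v w := by
  rw [Algebra.smul_def, map_mul]
  exact mul_le_of_le_one_left' (h.map_const_le_one c)

lemma map_y_pow (h : IsKummerArtinSchreier v x y z d P U V) : v y ^ d = v x := by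
  rw [← map_pow, h.kummer]
  exact Valuation.map_add_eq_of_lt_left _ (h.map_x_inv_lt_one.trans h.one_lt_map_x)

lemma map_z_pow (h : IsKummerArtinSchreier v x y z d P U V) : v z ^ P = v x := by
  have hpole : v (U • x + V • x⁻¹) = v x := by
    rw [Valuation.map_add_eq_of_lt_left, h.map_smul h.coeff_ne_zero]
    rw [h.map_smul h.coeff_ne_zero]
    exact (h.map_smul_le V _).trans_lt (h.map_x_inv_lt_one.trans h.one_lt_map_x)
  have hsub : z ^ P - z = U • x + V • x⁻¹ := by rw [h.artinSchreier, add_sub_cancel_left]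
  have hz : 1 < v z := by
    by_contra! hle
    refine h.one_lt_map_x.not_ge ?_
    rw [← hpole, ← hsub]
    exact v.map_sub_le (by rw [map_pow]; exact pow_le_one₀ zero_le hle) hle
  have hlt : v z < v (z ^ P) := by
    rw [map_pow]
    exact lt_self_pow₀ hz h.one_lt_P
  rw [← map_pow, ← Valuation.map_sub_eq_of_lt_left _ hlt, hsub, hpole]

lemma y_ne_zero (h : IsKummerArtinSchreier v x y z d P U V) : y ≠ 0 := by
  rw [← v.ne_zero_iff, ← pow_ne_zero_iff h.d_pos.ne', h.map_y_pow]
  exact h.map_x_ne_zero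

lemma z_ne_zero (h : IsKummerArtinSchreier v x y z d P U V) : z ≠ 0 := by
  rw [← v.ne_zero_iff, ← pow_ne_zero_iff h.P_pos.ne', h.map_z_pow]
  exact h.map_x_ne_zero

lemma monom_ne_zero (h : IsKummerArtinSchreier v x y z d P U V) (t : ℕ × ℕ × ℕ) :
    monom x y z t ≠ 0 :=
  mul_ne_zero (mul_ne_zero (pow_ne_zero _ h.x_ne_zero) (pow_ne_zero _ h.y_ne_zero))
    (pow_ne_zero _ h.z_ne_zero)

lemma map_monom_pow (h : IsKummerArtinSchreier v x y z d P U V) (t : ℕ × ℕ × ℕ) :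
    v (monom x y z t) ^ (d * P) = v x ^ poleOrder d P t := by
  have hy : v y ^ (d * P) = v x ^ P := by rw [pow_mul, h.map_y_pow]
  have hz : v z ^ (d * P) = v x ^ d := by rw [pow_mul', h.map_z_pow]
  rw [map_monom, monom_pow, monom, hy, hz, ← pow_mul, ← pow_mul, ← pow_mul, ← pow_add, ← pow_add,
    poleOrder]

lemma map_aeval (h : IsKummerArtinSchreier v x y z d P U V) {p : K[X]} (hp : p ≠ 0) :
    v (aeval x p) = v x ^ p.natDegree := by
  have hlead : p.coeff p.natDegree ≠ 0 := by simpa using hp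
  rw [aeval_eq_sum_range, Valuation.map_sum_eq_of_lt v (j := p.natDegree) (by simp),
    h.map_smul hlead, map_pow]
  intro i hi
  simp only [Finset.mem_sdiff, Finset.mem_range, Finset.mem_singleton] at hi
  refine (h.map_smul_le _ _).trans_lt ?_
  rw [h.map_smul hlead, map_pow, map_pow]
  exact pow_lt_pow_right₀ h.one_lt_map_x (by omega)

end Valuation

end IsKummerArtinSchreier

section BoxSpan

variable (K : Type*) {E : Type*} [Field K] [Field E] [Algebra K E] (x y z : E) (d P : ℕ)

/-- The `K`-span of the monomials with exponents in `exponentBox N d P`. -/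
def boxSpan (N : ℕ) : Submodule K E :=
  Submodule.span K (monom x y z '' exponentBox N d P)

instance (N : ℕ) : FiniteDimensional K (boxSpan K x y z d P N) :=
  FiniteDimensional.span_of_finite K ((Finset.finite_toSet _).image _)

lemma finrank_boxSpan_le (N : ℕ) : Module.finrank K (boxSpan K x y z d P N) ≤ N * (d * P) := by
  classical
  rw [boxSpan, ← Finset.coe_image, ← card_exponentBox]
  exact (finrank_span_finset_le_card _).trans Finset.card_image_le

variable {K x y z d P}

lemma monom_mem_boxSpan {N : ℕ} {t : ℕ × ℕ × ℕ} (ht : t ∈ exponentBox N d P) :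
    monom x y z t ∈ boxSpan K x y z d P N :=
  Submodule.subset_span ⟨t, ht, rfl⟩

lemma boxSpan_mono {N N' : ℕ} (h : N ≤ N') : boxSpan K x y z d P N ≤ boxSpan K x y z d P N' :=
  Submodule.span_mono <| Set.image_mono fun t ht => by
    simp only [Finset.mem_coe, mem_exponentBox] at ht ⊢
    omega

lemma mul_mem_of_forall_mul_monom_mem {N : ℕ} {S : Submodule K E} {w m : E}
    (hw : ∀ t ∈ exponentBox N d P, w * monom x y z t ∈ S) (hm : m ∈ boxSpan K x y z d P N) :
    w * m ∈ S := by
  have hle : boxSpan K x y z d P N ≤ S.comap (LinearMap.mulLeft K w) :=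
    Submodule.span_le.mpr (by rintro _ ⟨t, ht, rfl⟩; exact hw t ht)
  exact hle hm

lemma pow_mul_mem_boxSpan {w : E} {e : ℕ}
    (hw : ∀ N, ∀ m ∈ boxSpan K x y z d P N, w * m ∈ boxSpan K x y z d P (N + e))
    (k : ℕ) {N : ℕ} {m : E} (hm : m ∈ boxSpan K x y z d P N) :
    w ^ k * m ∈ boxSpan K x y z d P (N + e * k) := by
  induction k with
  | zero => simpa using hm
  | succ k ih =>
    rw [pow_succ', mul_assoc, Nat.mul_succ, ← add_assoc]
    exact hw _ _ ih

lemma x_mul_mem_boxSpan (N : ℕ) (m : E) (hm : m ∈ boxSpan K x y z d P N) :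
    x * m ∈ boxSpan K x y z d P (N + 1) := by
  refine mul_mem_of_forall_mul_monom_mem (fun ⟨i, a, b⟩ ht => ?_) hm
  have hmul : x * monom x y z (i, a, b) = monom x y z (i + 1, a, b) := by
    simp only [monom]; ring
  rw [hmul]
  refine monom_mem_boxSpan ?_
  simp only [mem_exponentBox] at ht ⊢
  omega

end BoxSpan

namespace IsKummerArtinSchreier

variable {K E Γ : Type*} [Field K] [Field E] [Algebra K E] [LinearOrderedCommGroupWithZero Γ]
  {v : Valuation E Γ} {x y z : E} {d P : ℕ} {U V : K}

lemma one_mem_boxSpan (h : IsKummerArtinSchreier v x y z d P U V) :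
    (1 : E) ∈ boxSpan K x y z d P 1 := by
  have : monom x y z (0, 0, 0) ∈ boxSpan K x y z d P 1 :=
    monom_mem_boxSpan (mem_exponentBox.mpr ⟨one_pos, h.d_pos, h.P_pos⟩)
  simpa [monom] using this

lemma xy_mul_mem_boxSpan (h : IsKummerArtinSchreier v x y z d P U V) (N : ℕ) (m : E)
    (hm : m ∈ boxSpan K x y z d P N) : x * y * m ∈ boxSpan K x y z d P (N + 2) := by
  refine mul_mem_of_forall_mul_monom_mem (fun ⟨i, a, b⟩ ht => ?_) hm
  obtain ⟨hi, ha, hb⟩ := mem_exponentBox.mp ht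
  dsimp only at hi ha hb
  rcases (Nat.succ_le_of_lt ha).lt_or_eq with hlt | rfl
  · have hmul : x * y * monom x y z (i, a, b) = monom x y z (i + 1, a + 1, b) := by
      simp only [monom]; ring
    rw [hmul]
    exact monom_mem_boxSpan (mem_exponentBox.mpr ⟨by grind, hlt, hb⟩)
  · have hmul : x * y * monom x y z (i, a, b) =
        monom x y z (i + 2, 0, b) + monom x y z (i, 0, b) := by
      have hx := h.x_ne_zero
      have : x * y * monom x y z (i, a, b) = x ^ (i + 1) * z ^ b * y ^ (a + 1) := by
        simp only [monom]; ring
      rw [this, h.kummer]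
      simp only [monom]
      field_simp
      ring
    rw [hmul]
    exact add_mem (monom_mem_boxSpan (mem_exponentBox.mpr ⟨by grind, h.d_pos, hb⟩))
      (monom_mem_boxSpan (mem_exponentBox.mpr ⟨by grind, h.d_pos, hb⟩))

lemma xz_mul_mem_boxSpan (h : IsKummerArtinSchreier v x y z d P U V) (N : ℕ) (m : E)
    (hm : m ∈ boxSpan K x y z d P N) : x * z * m ∈ boxSpan K x y z d P (N + 2) := by
  refine mul_mem_of_forall_mul_monom_mem (fun ⟨i, a, b⟩ ht => ?_) hm
  obtain ⟨hi, ha, hb⟩ := mem_exponentBox.mp ht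
  dsimp only at hi ha hb
  have hxz : x * z * monom x y z (i, a, b) = x ^ (i + 1) * y ^ a * z ^ (b + 1) := by
    simp only [monom]; ring
  rcases (Nat.succ_le_of_lt hb).lt_or_eq with hlt | rfl
  · rw [hxz]
    exact monom_mem_boxSpan (t := (i + 1, a, b + 1)) (mem_exponentBox.mpr ⟨by grind, ha, hlt⟩)
  · have hmul : x * z * monom x y z (i, a, b) = monom x y z (i + 1, a, 1) +
        (U • monom x y z (i + 2, a, 0) + V • monom x y z (i, a, 0)) := by
      have hx := h.x_ne_zero
      rw [hxz, h.artinSchreier]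
      simp only [monom, Algebra.smul_def]
      field_simp
      ring
    rw [hmul]
    exact add_mem (monom_mem_boxSpan (mem_exponentBox.mpr ⟨by grind, ha, h.one_lt_P⟩)) <| add_mem
      (Submodule.smul_mem _ _ (monom_mem_boxSpan (mem_exponentBox.mpr ⟨by grind, ha, h.P_pos⟩)))
      (Submodule.smul_mem _ _ (monom_mem_boxSpan (mem_exponentBox.mpr ⟨by grind, ha, h.P_pos⟩)))

lemma x_pow_mul_monom_mem_boxSpan (h : IsKummerArtinSchreier v x y z d P U V) {R : ℕ}
    {t : ℕ × ℕ × ℕ} (hR : t.2.1 + t.2.2 ≤ R) :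
    x ^ R * monom x y z t ∈ boxSpan K x y z d P (1 + t.1 + 2 * R) := by
  obtain ⟨i, a, b⟩ := t
  obtain ⟨R', rfl⟩ := Nat.exists_eq_add_of_le hR
  have hmul : x ^ (a + b + R') * monom x y z (i, a, b) =
      x ^ (R' + i) * ((x * y) ^ a * ((x * z) ^ b * 1)) := by
    simp only [monom, pow_add, mul_pow]; ring
  rw [hmul]
  exact boxSpan_mono (by dsimp only; omega) <| pow_mul_mem_boxSpan x_mul_mem_boxSpan _ <|
    pow_mul_mem_boxSpan h.xy_mul_mem_boxSpan a <|
    pow_mul_mem_boxSpan h.xz_mul_mem_boxSpan b h.one_mem_boxSpan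

end IsKummerArtinSchreier

section Coordinates

variable {K E : Type*} [Field K] [Field E] [Algebra K E] {d P : ℕ}

/-- The function with coordinates `C` in the family `y ^ a * z ^ b`, `a < d`, `b < P`, over the
polynomials in `x`. -/
noncomputable def ofCoords (x y z : E) : (Fin d × Fin P → K[X]) →ₗ[K] E :=
  ∑ t, LinearMap.mulRight K (y ^ (t.1 : ℕ) * z ^ (t.2 : ℕ)) ∘ₗ (aeval x).toLinearMap ∘ₗ
    LinearMap.proj t

lemma ofCoords_apply (x y z : E) (C : Fin d × Fin P → K[X]) :
    ofCoords x y z C = ∑ t, aeval x (C t) * (y ^ (t.1 : ℕ) * z ^ (t.2 : ℕ)) := by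
  simp [ofCoords, mul_assoc]

lemma ofCoords_smul (x y z : E) (p : K[X]) (C : Fin d × Fin P → K[X]) :
    ofCoords x y z (p • C) = aeval x p * ofCoords x y z C := by
  simp [ofCoords_apply, Finset.mul_sum, mul_assoc]

lemma boxSpan_le_range_ofCoords (x y z : E) (N : ℕ) :
    boxSpan K x y z d P N ≤ LinearMap.range (ofCoords (d := d) (P := P) x y z) := by
  refine Submodule.span_le.mpr ?_
  rintro _ ⟨⟨i, a, b⟩, ht, rfl⟩
  obtain ⟨-, ha, hb⟩ := mem_exponentBox.mp ht
  refine ⟨Pi.single (⟨a, ha⟩, ⟨b, hb⟩) (X ^ i), ?_⟩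
  rw [ofCoords_apply, Finset.sum_eq_single (⟨a, ha⟩, ⟨b, hb⟩)]
  · simp [monom, mul_assoc]
  · intro t _ ht
    simp [Pi.single_eq_of_ne ht]
  · simp

/-- The coordinate ring `K[x, x⁻¹, y, z]`. -/
abbrev coordRing (K : Type*) {E : Type*} [Field K] [Field E] [Algebra K E] (x y z : E) :
    Subalgebra K E :=
  Algebra.adjoin K {x, x⁻¹, y, z}

end Coordinates

namespace IsKummerArtinSchreier

variable {K E Γ : Type*} [Field K] [Field E] [Algebra K E] [LinearOrderedCommGroupWithZero Γ]
  {v : Valuation E Γ} {x y z : E} {d P : ℕ} {U V : K}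

lemma map_aeval_mul_monom_pow (h : IsKummerArtinSchreier v x y z d P U V) {p : K[X]} (hp : p ≠ 0)
    (a b : ℕ) : v (aeval x p * (y ^ a * z ^ b)) ^ (d * P) =
      v x ^ poleOrder d P (p.natDegree, a, b) := by
  rw [← h.map_monom_pow, monom, mul_assoc]
  simp only [map_mul, map_pow, h.map_aeval hp]

lemma exists_map_ofCoords_pow (h : IsKummerArtinSchreier v x y z d P U V)
    {C : Fin d × Fin P → K[X]} (hC : C ≠ 0) :
    ∃ t, C t ≠ 0 ∧
      v (ofCoords x y z C) ^ (d * P) = v x ^ poleOrder d P ((C t).natDegree, t.1, t.2) := by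
  let f (t : Fin d × Fin P) : E := aeval x (C t) * (y ^ (t.1 : ℕ) * z ^ (t.2 : ℕ))
  have hCf : ∀ t, f t ≠ 0 ↔ C t ≠ 0 := by
    intro t
    refine ⟨fun hf hCt => hf (by simp [f, hCt]), fun hCt hf => ?_⟩
    have := h.map_aeval_mul_monom_pow hCt t.1 t.2
    rw [show aeval x (C t) * (y ^ (t.1 : ℕ) * z ^ (t.2 : ℕ)) = 0 from hf, map_zero,
      zero_pow h.dP_ne_zero] at this
    exact pow_ne_zero _ h.map_x_ne_zero this.symm
  obtain ⟨t₀, ht₀⟩ := Function.ne_iff.mp hC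
  obtain ⟨t, -, ht, hvt⟩ := exists_valuation_sum_pow_eq v h.one_lt_map_x (n := d * P)
    Finset.univ f (fun t => poleOrder d P ((C t).natDegree, t.1, t.2))
    (fun t _ ht => h.map_aeval_mul_monom_pow ((hCf t).mp ht) t.1 t.2)
    (fun t _ t' _ htt' => by
      have := poleOrder_inj h.coprime t.1.2 t.2.2 t'.1.2 t'.2.2 htt'
      simp only [Prod.mk.injEq] at this
      exact Prod.ext (Fin.ext this.2.1) (Fin.ext this.2.2))
    ⟨t₀, Finset.mem_univ _, (hCf t₀).mpr ht₀⟩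
  exact ⟨t, (hCf t).mp ht, by rw [ofCoords_apply]; exact hvt⟩

lemma ofCoords_injective (h : IsKummerArtinSchreier v x y z d P U V) :
    Function.Injective (ofCoords (K := K) (d := d) (P := P) x y z) := by
  refine (injective_iff_map_eq_zero _).mpr fun C hC => by_contra fun hne => ?_
  obtain ⟨t, -, ht⟩ := h.exists_map_ofCoords_pow hne
  rw [hC, map_zero, zero_pow h.dP_ne_zero] at ht
  exact pow_ne_zero _ h.map_x_ne_zero ht.symm

lemma exists_x_pow_mul_mem_boxSpan_of_mem_closure (h : IsKummerArtinSchreier v x y z d P U V)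
    {w : E} (hw : w ∈ Submonoid.closure {x, x⁻¹, y, z}) :
    ∃ k N, x ^ k * w ∈ boxSpan K x y z d P N := by
  induction hw using Submonoid.closure_induction_left with
  | one => exact ⟨0, 1, by simpa using h.one_mem_boxSpan⟩
  | mul_left g hg w _ ih =>
    obtain ⟨k, N, hk⟩ := ih
    rcases hg with rfl | rfl | rfl | rfl
    · exact ⟨k, N + 1, by simpa only [mul_left_comm] using x_mul_mem_boxSpan N _ hk⟩
    · refine ⟨k + 1, N, ?_⟩
      rwa [pow_succ, mul_assoc, mul_inv_cancel_left₀ h.x_ne_zero]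
    · refine ⟨k + 1, N + 2, ?_⟩
      convert h.xy_mul_mem_boxSpan N _ hk using 1
      ring
    · refine ⟨k + 1, N + 2, ?_⟩
      convert h.xz_mul_mem_boxSpan N _ hk using 1
      ring

lemma exists_x_pow_mul_mem_boxSpan (h : IsKummerArtinSchreier v x y z d P U V) {w : E}
    (hw : w ∈ coordRing K x y z) : ∃ k N, x ^ k * w ∈ boxSpan K x y z d P N := by
  rw [← Subalgebra.mem_toSubmodule, Algebra.adjoin_eq_span] at hw
  induction hw using Submodule.span_induction with
  | mem w hw => exact h.exists_x_pow_mul_mem_boxSpan_of_mem_closure hw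
  | zero => exact ⟨0, 0, by simp⟩
  | add w w' _ _ ih ih' =>
    obtain ⟨k, N, hk⟩ := ih
    obtain ⟨k', N', hk'⟩ := ih'
    refine ⟨k + k', (N + 1 * k') + (N' + 1 * k), ?_⟩
    have hsplit : x ^ (k + k') * (w + w') = x ^ k' * (x ^ k * w) + x ^ k * (x ^ k' * w') := by
      ring
    rw [hsplit]
    exact add_mem (boxSpan_mono (by omega) (pow_mul_mem_boxSpan x_mul_mem_boxSpan k' hk))
      (boxSpan_mono (by omega) (pow_mul_mem_boxSpan x_mul_mem_boxSpan k hk'))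
  | smul c w _ ih =>
    obtain ⟨k, N, hk⟩ := ih
    exact ⟨k, N, by rw [mul_smul_comm]; exact Submodule.smul_mem _ c hk⟩

lemma isRoot_of_eq_sub_mul (h : IsKummerArtinSchreier v x y z d P U V)
    {C : Fin d × Fin P → K[X]} {c : K} (hc : c ≠ 0) {R : ℕ} {G w : E}
    (hG : ofCoords x y z C = x ^ R * G) (hw : w ∈ coordRing K x y z)
    (hGw : G = (x - algebraMap K E c) * w) (t : Fin d × Fin P) : (C t).IsRoot c := by
  obtain ⟨k, N, hk⟩ := h.exists_x_pow_mul_mem_boxSpan hw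
  obtain ⟨H, hH⟩ := boxSpan_le_range_ofCoords x y z N hk
  have hcoords : ofCoords x y z ((X ^ k : K[X]) • C) =
      ofCoords x y z ((X ^ R * (X - Polynomial.C c)) • H) := by
    rw [ofCoords_smul, ofCoords_smul, hG, hH, hGw]
    simp only [map_pow, map_mul, map_sub, aeval_X, aeval_C]
    ring
  have heval := congrArg (eval c) (congrFun (h.ofCoords_injective hcoords) t)
  simpa [hc] using heval

end IsKummerArtinSchreier

/-! ### Frobenius and the fibres of `x` -/

section Frobenius

lemma isReduced_of_forall_pow_eq_self {B : Type*} [MonoidWithZero B] {n : ℕ} (hn : 1 < n)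
    (h : ∀ w : B, w ^ n = w) : IsReduced B :=
  (isReduced_iff_pow_one_lt n hn).mpr fun w hw => by rw [← h w, hw]

/-- The iterated Frobenius `w ↦ w ^ (#F ^ j)` of a ring receiving a map from the finite field
`F`. -/
def powCardHom {F B : Type*} [Field F] [Fintype F] [CommRing B] (i : F →+* B) (j : ℕ) : B →+* B :=
  letI := i.toAlgebra
  ((FiniteField.frobeniusAlgHom F B) ^ j : B →ₐ[F] B).toRingHom

lemma powCardHom_apply {F B : Type*} [Field F] [Fintype F] [CommRing B] (i : F →+* B) (j : ℕ)
    (w : B) : powCardHom i j w = w ^ (Fintype.card F ^ j) := by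
  let := i.toAlgebra
  change ((FiniteField.frobeniusAlgHom F B) ^ j : B →ₐ[F] B) w = _
  rw [AlgHom.coe_pow, FiniteField.coe_frobeniusAlgHom, pow_iterate]

variable {F K B : Type*} [Field F] [Fintype F] [Field K] [CommRing B] [Algebra K B]

lemma pow_card_pow_eq_algebraMap_pow_mul [Fintype K] {α : K} {w : B}
    (hw : w ^ Fintype.card K = algebraMap K B α * w) (k : ℕ) :
    w ^ (Fintype.card K ^ k) = algebraMap K B (α ^ k) * w := by
  induction k with
  | zero => simp
  | succ k ih =>
    rw [pow_succ, pow_mul, ih, mul_pow, hw, ← map_pow, FiniteField.pow_card, ← mul_assoc,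
      ← map_mul, ← pow_succ]

lemma pow_card_pow_eq_add_algebraMap_mul [Fintype K] {β : K} {w : B}
    (hw : w ^ Fintype.card K = w + algebraMap K B β) (k : ℕ) :
    w ^ (Fintype.card K ^ k) = w + algebraMap K B (k * β) := by
  induction k with
  | zero => simp
  | succ k ih =>
    rw [pow_succ', pow_mul, hw, ← powCardHom_apply (algebraMap K B), map_add, powCardHom_apply,
      powCardHom_apply, ih, ← map_pow, FiniteField.pow_card_pow, add_assoc, ← map_add,
      Nat.cast_succ, add_one_mul]

lemma pow_card_pow_eq_algebraMap_prod_mul {η : K} {w : B}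
    (hw : w ^ (Fintype.card F - 1) = algebraMap K B η) (n : ℕ) :
    w ^ (Fintype.card F ^ n) =
      algebraMap K B (∏ i ∈ Finset.range n, η ^ (Fintype.card F ^ i)) * w := by
  have hcard : w ^ Fintype.card F = algebraMap K B η * w := by
    rw [← hw, ← pow_succ, Nat.sub_add_cancel Fintype.card_pos]
  induction n with
  | zero => simp
  | succ n ih =>
    rw [pow_succ', pow_mul, hcard, mul_pow, ih, Finset.prod_range_succ, map_mul, map_pow]
    ring

lemma pow_card_pow_eq_add_algebraMap_sum [Algebra F K] {g : K} {w : B}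
    (hw : w ^ Fintype.card F = w + algebraMap K B g) (n : ℕ) :
    w ^ (Fintype.card F ^ n) =
      w + algebraMap K B (∑ i ∈ Finset.range n, g ^ (Fintype.card F ^ i)) := by
  induction n with
  | zero => simp
  | succ n ih =>
    rw [pow_succ', pow_mul, hw, ← powCardHom_apply ((algebraMap K B).comp (algebraMap F K)),
      map_add, powCardHom_apply, powCardHom_apply, ih, Finset.sum_range_succ, ← map_pow, map_add,
      add_assoc]

variable [Fintype K] [Algebra F K]

lemma pow_card_eq_algebraMap_norm_mul {η : K} {w : B}
    (hw : w ^ (Fintype.card F - 1) = algebraMap K B η) :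
    w ^ Fintype.card K = algebraMap K B (algebraMap F K (Algebra.norm F η)) * w := by
  rw [FiniteField.algebraMap_norm_eq_prod_pow, Nat.card_eq_fintype_card,
    ← pow_card_pow_eq_algebraMap_prod_mul hw, Module.card_eq_pow_finrank (K := F)]

lemma pow_card_eq_add_algebraMap_trace {g : K} {w : B}
    (hw : w ^ Fintype.card F = w + algebraMap K B g) :
    w ^ Fintype.card K = w + algebraMap K B (algebraMap F K (Algebra.trace F K g)) := by
  rw [FiniteField.algebraMap_trace_eq_sum_pow, Nat.card_eq_fintype_card,
    ← pow_card_pow_eq_add_algebraMap_sum hw, Module.card_eq_pow_finrank (K := F)]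

end Frobenius

section Fiber

variable {K E : Type*} [Field K] [Field E] [Algebra K E]

/-- The generator `x` of `coordRing K x y z`. -/
def genX (K : Type*) {E : Type*} [Field K] [Field E] [Algebra K E] (x y z : E) :
    coordRing K x y z :=
  ⟨x, Algebra.subset_adjoin (by simp)⟩

/-- The generator `x⁻¹` of `coordRing K x y z`. -/
def genXInv (K : Type*) {E : Type*} [Field K] [Field E] [Algebra K E] (x y z : E) :
    coordRing K x y z :=
  ⟨x⁻¹, Algebra.subset_adjoin (by simp)⟩

/-- The generator `y` of `coordRing K x y z`. -/
def genY (K : Type*) {E : Type*} [Field K] [Field E] [Algebra K E] (x y z : E) :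
    coordRing K x y z :=
  ⟨y, Algebra.subset_adjoin (by simp)⟩

/-- The generator `z` of `coordRing K x y z`. -/
def genZ (K : Type*) {E : Type*} [Field K] [Field E] [Algebra K E] (x y z : E) :
    coordRing K x y z :=
  ⟨z, Algebra.subset_adjoin (by simp)⟩

/-- The ring of functions on the fibre `x = c`. -/
abbrev fiberRing (x y z : E) (c : K) : Type _ :=
  coordRing K x y z ⧸ Ideal.span {genX K x y z - algebraMap K _ c}

/-- Restriction of functions to the fibre `x = c`. -/
abbrev toFiber (x y z : E) (c : K) : coordRing K x y z →ₐ[K] fiberRing x y z c :=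
  Ideal.Quotient.mkₐ K _

variable {x y z : E} {c : K}

lemma exists_eq_sub_mul_of_toFiber_eq_zero {w : coordRing K x y z} (hw : toFiber x y z c w = 0) :
    ∃ w' ∈ coordRing K x y z, (w : E) = (x - algebraMap K E c) * w' := by
  rw [Ideal.Quotient.mkₐ_eq_mk, Ideal.Quotient.eq_zero_iff_mem, Ideal.mem_span_singleton] at hw
  obtain ⟨w', rfl⟩ := hw
  exact ⟨w', w'.2, rfl⟩

lemma toFiber_genX : toFiber x y z c (genX K x y z) = algebraMap K _ c := by
  rw [← (toFiber x y z c).commutes c, Ideal.Quotient.mkₐ_eq_mk, Ideal.Quotient.eq]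
  exact Ideal.subset_span rfl

lemma toFiber_genXInv (hx : x ≠ 0) (hc : c ≠ 0) :
    toFiber x y z c (genXInv K x y z) = algebraMap K _ c⁻¹ := by
  have hmul : genX K x y z * genXInv K x y z = 1 := Subtype.ext (mul_inv_cancel₀ hx)
  have hmul' := congrArg (toFiber x y z c) hmul
  rw [map_mul, toFiber_genX, map_one] at hmul'
  refine eq_of_sub_eq_zero (((IsUnit.mk0 c hc).map (algebraMap K _)).mul_right_eq_zero.mp ?_)
  rw [mul_sub, hmul', ← map_mul, mul_inv_cancel₀ hc, map_one, sub_self]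

end Fiber

namespace IsKummerArtinSchreier

variable {K E Γ : Type*} [Field K] [Field E] [Algebra K E] [LinearOrderedCommGroupWithZero Γ]
  {v : Valuation E Γ} {x y z : E} {d P : ℕ} {U V c : K}

lemma toFiber_genY_pow (h : IsKummerArtinSchreier v x y z d P U V) (hc : c ≠ 0) :
    toFiber x y z c (genY K x y z) ^ d = algebraMap K _ (c + c⁻¹) := by
  have hy : genY K x y z ^ d = genX K x y z + genXInv K x y z := Subtype.ext h.kummer
  rw [← map_pow, hy, map_add, toFiber_genX, toFiber_genXInv h.x_ne_zero hc, map_add]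

lemma toFiber_genZ_pow (h : IsKummerArtinSchreier v x y z d P U V) (hc : c ≠ 0) :
    toFiber x y z c (genZ K x y z) ^ P =
      toFiber x y z c (genZ K x y z) + algebraMap K _ (U * c + V * c⁻¹) := by
  have hz : genZ K x y z ^ P = genZ K x y z +
      (algebraMap K _ U * genX K x y z + algebraMap K _ V * genXInv K x y z) :=
    Subtype.ext (by rw [← Algebra.smul_def, ← Algebra.smul_def]; exact h.artinSchreier)
  rw [← map_pow, hz, map_add, map_add, map_mul, map_mul, toFiber_genX,
    toFiber_genXInv h.x_ne_zero hc, AlgHom.commutes, AlgHom.commutes, map_add, map_mul, map_mul]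

/-- The `#K`-Frobenius multiplies `y` by a `d`-th root of unity and translates `z` by a constant
on the fibre, so some power of it is the identity. -/
lemma isReduced_fiberRing [Fintype K] (h : IsKummerArtinSchreier v x y z d P U V) (hc : c ≠ 0)
    {α β : K} (hα : α ^ d = 1) (hP : (P : K) = 0)
    (hY : toFiber x y z c (genY K x y z) ^ Fintype.card K =
      algebraMap K _ α * toFiber x y z c (genY K x y z))
    (hZ : toFiber x y z c (genZ K x y z) ^ Fintype.card K =
      toFiber x y z c (genZ K x y z) + algebraMap K _ β) :
    IsReduced (fiberRing x y z c) := by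
  let φ : fiberRing x y z c →ₐ[K] fiberRing x y z c :=
    FiniteField.frobeniusAlgHom K (fiberRing x y z c) ^ (d * P)
  have hφ : ∀ w, φ w = w ^ (Fintype.card K ^ (d * P)) := fun w => by
    simp only [φ, AlgHom.coe_pow, FiniteField.coe_frobeniusAlgHom, pow_iterate]
  have hcomp : φ.comp (toFiber x y z c) = toFiber x y z c := by
    refine AlgHom.adjoin_ext fun w hw => ?_
    rcases hw with rfl | rfl | rfl | rfl
    · change φ (toFiber _ y z c (genX K _ y z)) = toFiber _ y z c (genX K _ y z)
      rw [toFiber_genX, AlgHom.commutes]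
    · change φ (toFiber x y z c (genXInv K x y z)) = toFiber x y z c (genXInv K x y z)
      rw [toFiber_genXInv h.x_ne_zero hc, AlgHom.commutes]
    · change φ (toFiber x _ z c (genY K x _ z)) = toFiber x _ z c (genY K x _ z)
      rw [hφ, pow_card_pow_eq_algebraMap_pow_mul hY, pow_mul, hα, one_pow, map_one, one_mul]
    · change φ (toFiber x y _ c (genZ K x y _)) = toFiber x y _ c (genZ K x y _)
      rw [hφ, pow_card_pow_eq_add_algebraMap_mul hZ, Nat.cast_mul, hP, mul_zero, zero_mul,
        map_zero, add_zero]
  refine isReduced_of_forall_pow_eq_self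
    (one_lt_pow₀ (Fintype.one_lt_card (α := K)) h.dP_ne_zero) fun w => ?_
  obtain ⟨w, rfl⟩ := Ideal.Quotient.mkₐ_surjective K _ w
  rw [← hφ]
  exact DFunLike.congr_fun hcomp w

end IsKummerArtinSchreier

/-! ### Stepanov's auxiliary function -/

section AuxiliaryFunction

variable {K B B' : Type*} [Field K] [CommRing B] [Algebra K B] [CommRing B'] [Algebra K B']

/-- Stepanov's auxiliary function `∑ γ t • (monom x y z t.1 * monom x y z t.2 ^ s)`. -/
def auxSum (s : ℕ) (T : Finset ((ℕ × ℕ × ℕ) × (ℕ × ℕ × ℕ))) (γ : (ℕ × ℕ × ℕ) × (ℕ × ℕ × ℕ) → K)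
    (x y z : B) : B :=
  ∑ t ∈ T, γ t • monom x y z (t.1 + s • t.2)

/-- The `s`-th power of an auxiliary function with coefficients `γ t ^ s`, on the set where the
`s ^ 2`-power map acts by `x ↦ x`, `y ↦ α y`, `z ↦ z + β`; see `auxSum_pow`. -/
def twistedSum (s : ℕ) (T : Finset ((ℕ × ℕ × ℕ) × (ℕ × ℕ × ℕ)))
    (γ : (ℕ × ℕ × ℕ) × (ℕ × ℕ × ℕ) → K) (α β : K) (x y z : B) : B :=
  ∑ t ∈ T, γ t • (monom x y z t.1 ^ s * monom x (α • y) (z + algebraMap K B β) t.2)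

variable {s : ℕ} {T : Finset ((ℕ × ℕ × ℕ) × (ℕ × ℕ × ℕ))} {γ : (ℕ × ℕ × ℕ) × (ℕ × ℕ × ℕ) → K}
  {α β : K}

lemma map_auxSum (φ : B →ₐ[K] B') (x y z : B) :
    φ (auxSum s T γ x y z) = auxSum s T γ (φ x) (φ y) (φ z) := by
  simp only [auxSum, map_sum, map_smul, map_monom]

lemma map_twistedSum (φ : B →ₐ[K] B') (x y z : B) :
    φ (twistedSum s T γ α β x y z) = twistedSum s T γ α β (φ x) (φ y) (φ z) := by
  simp only [twistedSum, map_sum, map_smul, map_mul, map_pow, map_monom, map_add, AlgHom.commutes]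

lemma auxSum_pow (φ : B →+* B) (hφ : ∀ w, φ w = w ^ s) (hγ : ∀ c : K, c ^ (s * s) = c) {x y z : B}
    (hx : x ^ (s * s) = x) (hy : y ^ (s * s) = algebraMap K B α * y)
    (hz : z ^ (s * s) = z + algebraMap K B β) :
    auxSum s T (fun t => γ t ^ s) x y z ^ s = twistedSum s T γ α β x y z := by
  rw [auxSum, ← hφ, map_sum]
  refine Finset.sum_congr rfl fun t _ => ?_
  rw [hφ, _root_.smul_pow, ← pow_mul, hγ, monom_add_nsmul, mul_pow, ← pow_mul, monom_pow _ _ _ t.2,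
    hx, hy, hz, Algebra.smul_def α]

lemma monom_smul_add_algebraMap (x y z : B) (i a b : ℕ) :
    monom x (α • y) (z + algebraMap K B β) (i, a, b) =
      ∑ k ∈ Finset.range (b + 1), (α ^ a * (β ^ (b - k) * b.choose k)) • monom x y z (i, a, k) := by
  simp only [monom, add_pow, Finset.mul_sum, Algebra.smul_def, map_mul, map_pow, map_natCast]
  exact Finset.sum_congr rfl fun k _ => by ring

end AuxiliaryFunction

lemma exists_sum_smul_eq_zero_of_finrank_lt_card {K E ι : Type*} [Field K] [AddCommGroup E]
    [Module K E] {S : Submodule K E} [FiniteDimensional K S] {T : Finset ι} {f : ι → E}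
    (hf : ∀ i ∈ T, f i ∈ S) (hcard : Module.finrank K S < T.card) :
    ∃ γ : ι → K, ∑ i ∈ T, γ i • f i = 0 ∧ ∃ i ∈ T, γ i ≠ 0 := by
  refine not_linearIndepOn_finset_iff.mp fun hli => hcard.not_ge ?_
  let g (i : T) : S := ⟨f i, hf i i.2⟩
  have hg : LinearIndependent K g := LinearIndependent.of_comp S.subtype hli
  simpa using hg.fintype_card_le_finrank

namespace IsKummerArtinSchreier

variable {K E Γ : Type*} [Field K] [Field E] [Algebra K E] [LinearOrderedCommGroupWithZero Γ]
  {v : Valuation E Γ} {x y z : E} {d P : ℕ} {U V : K} {s L I : ℕ}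
  {γ : (ℕ × ℕ × ℕ) × (ℕ × ℕ × ℕ) → K}

lemma x_pow_mul_auxSum_mem_boxSpan (h : IsKummerArtinSchreier v x y z d P U V) :
    x ^ ((d + P) * (s + 1)) * auxSum s (exponentBox L d P ×ˢ exponentBox I d P) γ x y z ∈
      boxSpan K x y z d P (1 + L + I * s + 2 * ((d + P) * (s + 1))) := by
  rw [auxSum, Finset.mul_sum]
  refine Submodule.sum_mem _ fun t ht => ?_
  obtain ⟨h₁, h₂⟩ := Finset.mem_product.mp ht
  obtain ⟨hi₁, ha₁, hb₁⟩ := mem_exponentBox.mp h₁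
  obtain ⟨hi₂, ha₂, hb₂⟩ := mem_exponentBox.mp h₂
  rw [mul_smul_comm]
  refine Submodule.smul_mem _ _ (boxSpan_mono ?_ (h.x_pow_mul_monom_mem_boxSpan ?_))
  · simp only [Prod.fst_add, Prod.smul_fst, smul_eq_mul]
    nlinarith
  · simp only [Prod.fst_add, Prod.snd_add, Prod.smul_fst, Prod.smul_snd, smul_eq_mul]
    nlinarith

lemma x_pow_mul_twisted_monom_mem_boxSpan (h : IsKummerArtinSchreier v x y z d P U V) (α β : K)
    {t t' : ℕ × ℕ × ℕ} (ht : t ∈ exponentBox L d P) (ht' : t' ∈ exponentBox I d P) :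
    x ^ ((d + P) * (s + 1)) *
        (monom x y z t ^ s * monom x (α • y) (z + algebraMap K E β) t') ∈
      boxSpan K x y z d P (1 + L * s + I + 2 * ((d + P) * (s + 1))) := by
  obtain ⟨hi, ha, hb⟩ := mem_exponentBox.mp ht
  obtain ⟨i', a', b'⟩ := t'
  obtain ⟨hi', ha', hb'⟩ := mem_exponentBox.mp ht'
  dsimp only at hi' ha' hb'
  rw [monom_smul_add_algebraMap, Finset.mul_sum, Finset.mul_sum]
  refine Submodule.sum_mem _ fun k hk => ?_
  have hk' : k < P := (Finset.mem_range_succ_iff.mp hk).trans_lt hb'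
  rw [mul_smul_comm, mul_smul_comm, mul_comm (monom x y z t ^ s), ← monom_add_nsmul]
  refine Submodule.smul_mem _ _ (boxSpan_mono ?_ (h.x_pow_mul_monom_mem_boxSpan ?_))
  · simp only [Prod.fst_add, Prod.smul_fst, smul_eq_mul]
    nlinarith
  · simp only [Prod.fst_add, Prod.snd_add, Prod.smul_fst, Prod.smul_snd, smul_eq_mul]
    nlinarith

lemma exists_twistedSum_eq_zero (h : IsKummerArtinSchreier v x y z d P U V) (α β : K)
    (hI : 1 + L * s + I + 2 * ((d + P) * (s + 1)) < L * I * (d * P)) :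
    ∃ γ, twistedSum s (exponentBox L d P ×ˢ exponentBox I d P) γ α β x y z = 0 ∧
      ∃ t ∈ exponentBox L d P ×ˢ exponentBox I d P, γ t ≠ 0 := by
  have hcard : Module.finrank K
      (boxSpan K x y z d P (1 + L * s + I + 2 * ((d + P) * (s + 1)))) <
        (exponentBox L d P ×ˢ exponentBox I d P).card := by
    refine (finrank_boxSpan_le K x y z d P _).trans_lt ?_
    rw [Finset.card_product, card_exponentBox, card_exponentBox, mul_mul_mul_comm,
      ← mul_assoc (L * I)]
    exact Nat.mul_lt_mul_of_pos_right hI (Nat.pos_of_ne_zero h.dP_ne_zero)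
  obtain ⟨γ, hsum, hne⟩ := exists_sum_smul_eq_zero_of_finrank_lt_card (fun t ht =>
    h.x_pow_mul_twisted_monom_mem_boxSpan α β (Finset.mem_product.mp ht).1
      (Finset.mem_product.mp ht).2) hcard
  refine ⟨γ, ?_, hne⟩
  have hmul : x ^ ((d + P) * (s + 1)) *
      twistedSum s (exponentBox L d P ×ˢ exponentBox I d P) γ α β x y z = 0 := by
    simp only [twistedSum, Finset.mul_sum, mul_smul_comm, hsum]
  exact (mul_eq_zero.mp hmul).resolve_left (pow_ne_zero _ h.x_ne_zero)

lemma poleOrder_add_nsmul_inj (h : IsKummerArtinSchreier v x y z d P U V)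
    (hL : d * P * (L + 1) ≤ s) {t t' : (ℕ × ℕ × ℕ) × (ℕ × ℕ × ℕ)}
    (ht : t ∈ exponentBox L d P ×ˢ exponentBox I d P)
    (ht' : t' ∈ exponentBox L d P ×ˢ exponentBox I d P)
    (htt' : poleOrder d P (t.1 + s • t.2) = poleOrder d P (t'.1 + s • t'.2)) : t = t' := by
  obtain ⟨h₁, h₂⟩ := Finset.mem_product.mp ht
  obtain ⟨h₁', h₂'⟩ := Finset.mem_product.mp ht'
  have hlt := (poleOrder_lt_of_mem_exponentBox h₁).trans_le hL
  have hlt' := (poleOrder_lt_of_mem_exponentBox h₁').trans_le hL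
  rw [poleOrder_add_nsmul, poleOrder_add_nsmul] at htt'
  have hfst : poleOrder d P t.1 = poleOrder d P t'.1 := by
    have := congrArg (· % s) htt'
    simpa [Nat.mod_eq_of_lt hlt, Nat.mod_eq_of_lt hlt'] using this
  have hsnd : poleOrder d P t.2 = poleOrder d P t'.2 :=
    Nat.eq_of_mul_eq_mul_left (Nat.zero_lt_of_lt hlt) (by omega)
  simp only [mem_exponentBox] at h₁ h₂ h₁' h₂'
  exact Prod.ext (poleOrder_inj h.coprime h₁.2.1 h₁.2.2 h₁'.2.1 h₁'.2.2 hfst)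
    (poleOrder_inj h.coprime h₂.2.1 h₂.2.2 h₂'.2.1 h₂'.2.2 hsnd)

lemma exists_map_auxSum_pow_eq (h : IsKummerArtinSchreier v x y z d P U V)
    (hL : d * P * (L + 1) ≤ s)
    (hγ : ∃ t ∈ exponentBox L d P ×ˢ exponentBox I d P, γ t ≠ 0) :
    ∃ k ≤ s + s * (d * P * (I + 1)),
      v (auxSum s (exponentBox L d P ×ˢ exponentBox I d P) γ x y z) ^ (d * P) = v x ^ k := by
  obtain ⟨t, ht, -, hvt⟩ := exists_valuation_sum_pow_eq v h.one_lt_map_x (n := d * P)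
    (exponentBox L d P ×ˢ exponentBox I d P) (fun t => γ t • monom x y z (t.1 + s • t.2))
    (fun t => poleOrder d P (t.1 + s • t.2))
    (fun t _ ht => by rw [h.map_smul (left_ne_zero_of_smul ht), h.map_monom_pow])
    (fun t ht t' ht' => h.poleOrder_add_nsmul_inj hL ht ht')
    (by
      obtain ⟨t, ht, hne⟩ := hγ
      exact ⟨t, ht, smul_ne_zero hne (h.monom_ne_zero _)⟩)
  refine ⟨_, ?_, hvt⟩
  obtain ⟨h₁, h₂⟩ := Finset.mem_product.mp ht
  rw [poleOrder_add_nsmul]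
  exact add_le_add ((poleOrder_lt_of_mem_exponentBox h₁).le.trans hL)
    (Nat.mul_le_mul_left _ (poleOrder_lt_of_mem_exponentBox h₂).le)

lemma mul_card_le_of_forall_isRoot (h : IsKummerArtinSchreier v x y z d P U V)
    {C : Fin d × Fin P → K[X]} {R k : ℕ} {G : E} (hG : ofCoords x y z C = x ^ R * G)
    (hk : v G ^ (d * P) = v x ^ k) {S : Finset K} (hroot : ∀ c ∈ S, ∀ t, (C t).IsRoot c) :
    d * P * S.card ≤ d * P * R + k := by
  have hC : C ≠ 0 := by
    rintro rfl
    rw [map_zero, zero_eq_mul, or_iff_right (pow_ne_zero _ h.x_ne_zero)] at hG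
    rw [hG, map_zero, zero_pow h.dP_ne_zero] at hk
    exact pow_ne_zero _ h.map_x_ne_zero hk.symm
  obtain ⟨t, ht, hvt⟩ := h.exists_map_ofCoords_pow hC
  have hdeg : S.card ≤ (C t).natDegree :=
    card_le_degree_of_subset_roots fun c hc => (mem_roots ht).mpr (hroot c hc t)
  rw [hG, map_mul, mul_pow, hk, map_pow, ← pow_mul', ← pow_add] at hvt
  have horder : d * P * R + k = poleOrder d P ((C t).natDegree, t.1, t.2) :=
    pow_right_injective₀ (zero_lt_one.trans h.one_lt_map_x) h.one_lt_map_x.ne' hvt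
  rw [horder, poleOrder, add_assoc]
  exact (Nat.mul_le_mul_left _ hdeg).trans (Nat.le_add_right _ _)

section Points

variable {F : Type*} [Field F] [Fintype F] [Fintype K] [Algebra F K] {c : K} {m : ℕ}

/-- On the fibre the `s`-th power of the auxiliary function is the twisted sum, which vanishes. -/
lemma toFiber_auxSum_eq_zero
    (h : IsKummerArtinSchreier v x y z (Fintype.card F - 1) (Fintype.card F) U V)
    (hs : s = Fintype.card F ^ m) (hcard : Fintype.card K = s * s) (hc : c ≠ 0)
    (hnorm : Algebra.norm F (c + c⁻¹) ≠ 0) {T : Finset ((ℕ × ℕ × ℕ) × (ℕ × ℕ × ℕ))}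
    (hT : twistedSum s T γ (algebraMap F K (Algebra.norm F (c + c⁻¹)))
      (algebraMap F K (Algebra.trace F K (U * c + V * c⁻¹))) x y z = 0) :
    toFiber x y z c (auxSum s T (fun t => γ t ^ s) (genX K x y z) (genY K x y z) (genZ K x y z)) =
      0 := by
  have hY := pow_card_eq_algebraMap_norm_mul (h.toFiber_genY_pow hc)
  have hZ := pow_card_eq_add_algebraMap_trace (h.toFiber_genZ_pow hc)
  have hT' : twistedSum s T γ (algebraMap F K (Algebra.norm F (c + c⁻¹)))
      (algebraMap F K (Algebra.trace F K (U * c + V * c⁻¹)))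
      (genX K x y z) (genY K x y z) (genZ K x y z) = 0 :=
    Subtype.ext ((map_twistedSum (coordRing K x y z).val _ _ _).trans hT)
  have hreduced : IsReduced (fiberRing x y z c) := by
    refine h.isReduced_fiberRing hc ?_ ?_ hY hZ
    · rw [← map_pow, FiniteField.pow_card_sub_one_eq_one _ hnorm, map_one]
    · rw [← map_natCast (algebraMap F K), FiniteField.cast_card_eq_zero, map_zero]
  refine eq_zero_of_pow_eq_zero (n := s) ?_
  rw [map_auxSum, auxSum_pow (powCardHom ((algebraMap K _).comp (algebraMap F K)) m)
    (fun w => by rw [powCardHom_apply, hs]) (fun w => by rw [← hcard, FiniteField.pow_card])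
    (by rw [toFiber_genX, ← map_pow, ← hcard, FiniteField.pow_card]) (hcard ▸ hY) (hcard ▸ hZ),
    ← map_twistedSum, hT', map_zero]

theorem mul_card_le
    (h : IsKummerArtinSchreier v x y z (Fintype.card F - 1) (Fintype.card F) U V)
    (hs : s = Fintype.card F ^ m) (hcard : Fintype.card K = s * s)
    (hL : (Fintype.card F - 1) * Fintype.card F * (L + 1) ≤ s)
    (hI : 1 + L * s + I + 2 * ((Fintype.card F - 1 + Fintype.card F) * (s + 1)) <
      L * I * ((Fintype.card F - 1) * Fintype.card F))
    {α β : F} (hα : α ≠ 0) {S : Finset K}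
    (hS : ∀ c ∈ S, Algebra.norm F (c + c⁻¹) = α ∧ Algebra.trace F K (U * c + V * c⁻¹) = β) :
    (Fintype.card F - 1) * Fintype.card F * S.card ≤
      (Fintype.card F - 1) * Fintype.card F * ((Fintype.card F - 1 + Fintype.card F) * (s + 1)) +
        (s + s * ((Fintype.card F - 1) * Fintype.card F * (I + 1))) := by
  obtain ⟨γ, hγ, t, ht, hne⟩ :=
    h.exists_twistedSum_eq_zero (algebraMap F K α) (algebraMap F K β) hI
  obtain ⟨k, hk, hvk⟩ := h.exists_map_auxSum_pow_eq (γ := fun t => γ t ^ s) hL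
    ⟨t, ht, pow_ne_zero s hne⟩
  obtain ⟨C, hC⟩ := boxSpan_le_range_ofCoords x y z _
    (h.x_pow_mul_auxSum_mem_boxSpan (γ := fun t => γ t ^ s) (s := s) (L := L) (I := I))
  refine (h.mul_card_le_of_forall_isRoot hC hvk fun c hcS => ?_).trans (Nat.add_le_add_left hk _)
  obtain ⟨hnorm, htrace⟩ := hS c hcS
  have hc : c ≠ 0 := by
    rintro rfl
    simp [hα.symm] at hnorm
  obtain ⟨w, hw, hGw⟩ := exists_eq_sub_mul_of_toFiber_eq_zero <|
    h.toFiber_auxSum_eq_zero hs hcard hc (hnorm ▸ hα) (hnorm ▸ htrace ▸ hγ)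
  exact h.isRoot_of_eq_sub_mul hc hC hw
    ((map_auxSum (coordRing K x y z).val _ _ _).symm.trans hGw)

end Points

end IsKummerArtinSchreier

/-! ### The point count -/

section Existence

variable {K E : Type*} [Field K] [Field E] [Algebra K E]

/-- The valuation subring lies over the local ring at `0` of the polynomials in `x⁻¹`. -/
lemma exists_valuationSubring_inv_mem_nonunits {x : E} (hx : Transcendental K x) :
    ∃ A : ValuationSubring E, (∀ c : K, algebraMap K E c ∈ A) ∧ x⁻¹ ∈ A.nonunits := by
  have hinv : Transcendental K x⁻¹ := fun h => hx (inv_inv x ▸ h.inv)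
  let R : Subring E := (aeval (R := K) x⁻¹).toRingHom.range
  let x' : R := ⟨x⁻¹, X, by simp⟩
  have hproper : Ideal.span {x'} ≠ ⊤ := by
    intro htop
    rw [Ideal.eq_top_iff_one, Ideal.mem_span_singleton'] at htop
    obtain ⟨⟨_, f, rfl⟩, hf⟩ := htop
    have hzero : aeval x⁻¹ (f * X - 1 : K[X]) = 0 := by
      have : aeval x⁻¹ f * x⁻¹ = 1 := congrArg Subtype.val hf
      simp [this]
    simpa using congrArg (eval 0) (transcendental_iff.mp hinv _ hzero)
  obtain ⟨A, hRA, hA⟩ := Ideal.image_subset_nonunits_valuationSubring _ hproper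
  exact ⟨A, fun c => hRA ⟨C c, by simp⟩, hA ⟨x', Ideal.subset_span rfl, rfl⟩⟩

lemma exists_pow_eq_add [IsAlgClosed E] {P : ℕ} (hP : 1 < P) (w : E) : ∃ z : E, z ^ P = z + w := by
  have hdeg : ((X : E[X]) ^ P - (X + C w)).degree = (P : WithBot ℕ) := by
    rw [degree_sub_eq_left_of_degree_lt, degree_X_pow]
    rw [degree_X_pow, degree_X_add_C]
    exact_mod_cast hP
  obtain ⟨z, hz⟩ := IsAlgClosed.exists_root ((X : E[X]) ^ P - (X + C w)) (by
    rw [hdeg]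
    exact_mod_cast (zero_lt_one.trans hP).ne')
  exact ⟨z, by simpa [sub_eq_zero] using hz⟩

end Existence

theorem exists_isKummerArtinSchreier.{u} {K : Type u} [Field K] {d P : ℕ} {U : K} (V : K)
    (hU : U ≠ 0) (hd : 0 < d) (hP : 1 < P) (hdP : d.Coprime P) :
    ∃ (E : Type u) (_ : Field E) (_ : Algebra K E) (Γ : Type u)
      (_ : LinearOrderedCommGroupWithZero Γ) (v : Valuation E Γ) (x y z : E),
      IsKummerArtinSchreier v x y z d P U V := by
  let E := AlgebraicClosure (RatFunc K)
  let x : E := algebraMap (RatFunc K) E RatFunc.X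
  have hx : Transcendental K x :=
    (transcendental_algebraMap_iff (algebraMap (RatFunc K) E).injective).mpr
      RatFunc.transcendental_X
  obtain ⟨y, hy⟩ := IsAlgClosed.exists_pow_nat_eq (x + x⁻¹) hd
  obtain ⟨z, hz⟩ := exists_pow_eq_add hP (U • x + V • x⁻¹)
  obtain ⟨A, hKA, hxA⟩ := exists_valuationSubring_inv_mem_nonunits hx
  have hle : ∀ c : K, A.valuation (algebraMap K E c) ≤ 1 :=
    fun c => (A.valuation_le_one_iff _).mpr (hKA c)
  refine ⟨E, inferInstance, inferInstance, A.ValueGroup, inferInstance, A.valuation, x, y, z,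
    ⟨fun c hc => (hle c).antisymm ?_, ?_, hy, hz, hU, hd, hP, hdP⟩⟩
  · have hpos : 0 < A.valuation (algebraMap K E c) := by
      simpa [zero_lt_iff] using hc
    have hinv := hle c⁻¹
    rwa [map_inv₀, map_inv₀, inv_le_one₀ hpos] at hinv
  · have hpos : 0 < A.valuation x := by
      rw [zero_lt_iff, Valuation.ne_zero_iff]
      exact fun h => hx (h ▸ isAlgebraic_zero)
    rwa [ValuationSubring.mem_nonunits_iff, map_inv₀, inv_lt_one₀ hpos] at hxA

section PointCount

/-- The constant of the error term in `card_mul_le_card_sq_add`, depending only on the order `Q`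
of the base field. -/
def pointCountConst (Q : ℕ) : ℕ := (Q - 1) * Q * (4 * Q + 20 * Q ^ 3 + 1) + 1

variable {d L s : ℕ}

lemma mul_succ_le_of_eq_sq_mul (hsL : s = (d + 1) ^ 2 * L) (hL : d + 1 ≤ L) :
    d * (d + 1) * (L + 1) ≤ s := by
  rw [hsL]
  nlinarith

lemma add_mul_succ_le (hd : 0 < d) (hs : d + 1 ≤ s) :
    (d + (d + 1)) * (s + 1) ≤ 4 * (s * (d + 1)) := by
  nlinarith

/-- The number of unknowns exceeds the number of equations for the coefficients of the auxiliary
function. -/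
lemma stepanov_parameters_lt (hd : 0 < d) (hsL : s = (d + 1) ^ 2 * L) (hL : d + 1 ≤ L) :
    1 + L * s + (s / (d * (d + 1)) + 20 * (d + 1) ^ 3) + 2 * ((d + (d + 1)) * (s + 1)) <
      L * (s / (d * (d + 1)) + 20 * (d + 1) ^ 3) * (d * (d + 1)) := by
  have hD : 2 ≤ d * (d + 1) := by nlinarith
  have hdiv := Nat.div_add_mod s (d * (d + 1))
  have hmod := (Nat.mod_lt s (zero_lt_two.trans_le hD)).le
  have hIs : s / (d * (d + 1)) ≤ s := Nat.div_le_self _ _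
  have hR : (d + (d + 1)) * (s + 1) ≤ 4 * (s * (d + 1)) := add_mul_succ_le hd (by nlinarith)
  have hsQ : s * (d + 1) = (d + 1) ^ 3 * L := by rw [hsL]; ring
  have hcube : 2 ^ 3 ≤ (d + 1) ^ 3 := Nat.pow_le_pow_left (by omega) 3
  generalize d * (d + 1) = D at *
  generalize s / D = I at *
  generalize s % D = r at *
  generalize (d + 1) ^ 3 = c at *
  generalize (d + (d + 1)) * (s + 1) = R at *
  have hLs : L * s ≤ L * (D * I) + L * D := by rw [← hdiv, mul_add]; gcongr
  have hLD : 8 * (L * D) ≤ c * L * D := by rw [mul_assoc]; gcongr; omega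
  have hcLD : c * L * 2 ≤ c * L * D := by gcongr
  have hsc : s ≤ c * L := by rw [← hsQ]; nlinarith
  have hcL : c * 2 ≤ c * L := by gcongr; omega
  linarith

lemma stepanov_bound_le (hd : 0 < d) (hs : d + 1 ≤ s) :
    d * (d + 1) * ((d + (d + 1)) * (s + 1)) +
        (s + s * (d * (d + 1) * (s / (d * (d + 1)) + 20 * (d + 1) ^ 3 + 1))) ≤
      s * s + pointCountConst (d + 1) * s := by
  have hdiv : s * (d * (d + 1) * (s / (d * (d + 1)))) ≤ s * s :=
    Nat.mul_le_mul_left s (Nat.mul_div_le s _)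
  have hR : d * (d + 1) * ((d + (d + 1)) * (s + 1)) ≤ d * (d + 1) * (4 * (s * (d + 1))) :=
    Nat.mul_le_mul_left _ (add_mul_succ_le hd hs)
  rw [pointCountConst, Nat.add_sub_cancel]
  generalize d * (d + 1) = D at *
  linarith

/-- The Stepanov–Bombieri bound; the even degree makes `√#K` a power of `#F`. -/
theorem card_mul_le_card_sq_add {F K : Type*} [Field F] [Fintype F] [Field K] [Finite K]
    [Algebra F K] {m : ℕ} (hm : 3 ≤ m) (hfinrank : Module.finrank F K = 2 * m) {U : F}
    (hU : U ≠ 0) (V : F) {α β : F} (hα : α ≠ 0) {S : Finset K}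
    (hS : ∀ c ∈ S, Algebra.norm F (c + c⁻¹) = α ∧ Algebra.trace F K (U • c + V • c⁻¹) = β) :
    (Fintype.card F - 1) * Fintype.card F * S.card ≤
      Fintype.card F ^ (2 * m) + pointCountConst (Fintype.card F) * Fintype.card F ^ m := by
  have := Fintype.ofFinite K
  have hQ : 1 < Fintype.card F := Fintype.one_lt_card
  obtain ⟨d, hd⟩ : ∃ d, Fintype.card F = d + 1 := Nat.exists_eq_add_of_le' hQ.le
  obtain ⟨k, rfl⟩ : ∃ k, m = k + 3 := Nat.exists_eq_add_of_le' hm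
  obtain ⟨E, _, _, Γ, _, v, x, y, z, h⟩ := exists_isKummerArtinSchreier (K := K)
    (d := Fintype.card F - 1) (P := Fintype.card F) (algebraMap F K V)
    ((map_ne_zero (algebraMap F K)).mpr hU) (by omega) hQ (by simp [hd])
  have hcard : Fintype.card K = Fintype.card F ^ (k + 3) * Fintype.card F ^ (k + 3) := by
    rw [Module.card_eq_pow_finrank (K := F), hfinrank, two_mul, pow_add]
  have hd0 : 0 < d := by omega
  have hsL : (d + 1) ^ (k + 3) = (d + 1) ^ 2 * (d + 1) ^ (k + 1) := by rw [← pow_add, add_comm 2]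
  have hL : d + 1 ≤ (d + 1) ^ (k + 1) := Nat.le_self_pow k.succ_ne_zero _
  have hs : d + 1 ≤ (d + 1) ^ (k + 3) := Nat.le_self_pow (by omega) _
  have hcount := h.mul_card_le (m := k + 3) (L := (d + 1) ^ (k + 1)) (S := S) (α := α) (β := β)
    (I := (d + 1) ^ (k + 3) / (d * (d + 1)) + 20 * (d + 1) ^ 3) rfl hcard
  simp only [hd, Nat.add_sub_cancel] at hcount ⊢
  calc d * (d + 1) * S.card
      ≤ _ := hcount (mul_succ_le_of_eq_sq_mul hsL hL) (stepanov_parameters_lt hd0 hsL hL) hα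
        (by simpa only [Algebra.smul_def] using hS)
    _ ≤ _ := stepanov_bound_le hd0 hs
    _ = _ := by ring

end PointCount

/-! ### Character sums over extensions of even degree -/

section MixedCharSum

lemma norm_mulChar_apply_le_one {F : Type*} [Field F] [Finite F] (χ : MulChar F ℂ) (x : F) :
    ‖χ x‖ ≤ 1 := by
  rcases eq_or_ne x 0 with rfl | hx
  · rw [χ.map_zero, norm_zero]
    exact zero_le_one
  · have := Fintype.ofFinite F
    have hpow : χ x ^ (Fintype.card F - 1) = 1 := by
      rw [← map_pow, FiniteField.pow_card_sub_one_eq_one x hx, map_one]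
    exact (Complex.norm_eq_one_of_pow_eq_one hpow
      (Nat.sub_pos_of_lt Fintype.one_lt_card).ne').le

/-- Junk-value convention: `0 + 0⁻¹ = 0` in a field, so `0` is among the exceptions. -/
lemma card_add_inv_eq_zero_le {K : Type*} [Field K] [Fintype K] [DecidableEq K] :
    (Finset.univ.filter fun c : K => c + c⁻¹ = 0).card ≤ 3 := by
  have hdeg : (X ^ 3 + X : K[X]).natDegree = 3 := by compute_degree!
  have hne : (X ^ 3 + X : K[X]) ≠ 0 := fun h => by simp [h] at hdeg
  rw [← hdeg]
  refine card_le_degree_of_subset_roots fun c hc => (mem_roots hne).mpr ?_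
  have hc0 : c + c⁻¹ = 0 := by simpa using hc
  have hcube : c ^ 3 + c = 0 := by
    rcases eq_or_ne c 0 with rfl | hcne
    · simp
    · linear_combination c ^ 2 * hc0 - c * mul_inv_cancel₀ hcne
  simpa using hcube

lemma norm_sum_mul_le_card_mul_sub_sum {ι : Type*} (T : Finset ι) {f : ι → ℂ} {n : ι → ℝ} {M : ℝ}
    (hf0 : ∑ t ∈ T, f t = 0) (hf : ∀ t ∈ T, ‖f t‖ ≤ 1) (hn : ∀ t ∈ T, n t ≤ M) :
    ‖∑ t ∈ T, f t * n t‖ ≤ T.card * M - ∑ t ∈ T, n t := by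
  have hsub : ∑ t ∈ T, f t * n t = ∑ t ∈ T, f t * ((n t - M : ℝ) : ℂ) := by
    simp only [Complex.ofReal_sub, mul_sub, Finset.sum_sub_distrib, ← Finset.sum_mul, hf0, zero_mul,
      sub_zero]
  calc ‖∑ t ∈ T, f t * n t‖ ≤ ∑ t ∈ T, (M - n t) := by
        rw [hsub]
        refine norm_sum_le_of_le T fun t ht => ?_
        rw [norm_mul, Complex.norm_real, Real.norm_eq_abs, abs_sub_comm,
          abs_of_nonneg (sub_nonneg.mpr (hn t ht))]
        exact mul_le_of_le_one_left (sub_nonneg.mpr (hn t ht)) (hf t ht)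
    _ = T.card * M - ∑ t ∈ T, n t := by simp [Finset.sum_sub_distrib]

/-- The sum of `χ (N (x + x⁻¹)) ψ (Tr (U x + V x⁻¹))` over the finite extension `K` of `F`. -/
noncomputable def mixedCharSum (F K : Type*) [Field F] [Field K] [Fintype K] [Algebra F K]
    (χ : MulChar F ℂ) (ψ : AddChar F ℂ) (U V : F) : ℂ :=
  ∑ x : K, χ (Algebra.norm F (x + x⁻¹)) * ψ (Algebra.trace F K (U • x + V • x⁻¹))

lemma norm_mixedCharSum_le_card {F K : Type*} [Field F] [Finite F] [Field K] [Fintype K]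
    [Algebra F K] (χ : MulChar F ℂ) (ψ : AddChar F ℂ) (U V : F) :
    ‖mixedCharSum F K χ ψ U V‖ ≤ Fintype.card K := by
  refine (norm_sum_le_of_le (n := fun _ => (1 : ℝ)) _ fun x _ => ?_).trans_eq (by simp)
  rw [norm_mul, AddChar.norm_apply, mul_one]
  exact norm_mulChar_apply_le_one _ _

/-- The elements `c` of `K` with `c + c⁻¹ ≠ 0` at which the norm of `c + c⁻¹` and the trace of
`U c + V c⁻¹` take the values `t.1` and `t.2`. -/
noncomputable def normTraceFiber {F : Type*} (K : Type*) [Field F] [Field K] [Fintype K]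
    [Algebra F K] (U V : F) (t : F × F) : Finset K :=
  open Classical in
  Finset.univ.filter fun c => c + c⁻¹ ≠ 0 ∧
    (Algebra.norm F (c + c⁻¹), Algebra.trace F K (U • c + V • c⁻¹)) = t

variable {F K : Type*} [Field F] [Fintype F] [Field K] [Fintype K] [Algebra F K]
  {χ : MulChar F ℂ} {ψ : AddChar F ℂ}

lemma sum_mulChar_mul_addChar_eq_zero [DecidableEq F] (hχψ : χ ≠ 1 ∨ ψ ≠ 1) :
    ∑ t ∈ ({0}ᶜ : Finset F) ×ˢ (Finset.univ : Finset F), χ t.1 * ψ t.2 = 0 := by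
  have hχ : ∑ a ∈ ({0}ᶜ : Finset F), χ a = ∑ a, χ a :=
    Finset.sum_subset (Finset.subset_univ _) fun a _ ha => by
      rw [Finset.notMem_compl, Finset.mem_singleton] at ha
      rw [ha, χ.map_zero]
  rw [Finset.sum_product, ← Finset.sum_mul_sum, hχ]
  rcases hχψ with h | h
  · rw [MulChar.sum_eq_zero_of_ne_one h, zero_mul]
  · rw [AddChar.sum_eq_zero_of_ne_one h, mul_zero]

lemma mixedCharSum_eq_sum_card_normTraceFiber [DecidableEq F] (U V : F) :
    mixedCharSum F K χ ψ U V = ∑ t ∈ ({0}ᶜ : Finset F) ×ˢ (Finset.univ : Finset F),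
      χ t.1 * ψ t.2 * ((normTraceFiber K U V t).card : ℝ) := by
  classical
  let g (c : K) : F × F := (Algebra.norm F (c + c⁻¹), Algebra.trace F K (U • c + V • c⁻¹))
  have hsupport : mixedCharSum F K χ ψ U V =
      ∑ c : K with c + c⁻¹ ≠ 0, χ (g c).1 * ψ (g c).2 :=
    (Finset.sum_filter_of_ne (p := fun c : K => c + c⁻¹ ≠ 0) fun c _ hc h0 =>
      hc (by rw [h0, Algebra.norm_zero, χ.map_zero, zero_mul])).symm
  rw [hsupport, ← Finset.sum_fiberwise_of_maps_to (g := g) (t := {0}ᶜ ×ˢ Finset.univ)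
    fun c hc => by simpa [g, Algebra.norm_eq_zero_iff] using hc]
  refine Finset.sum_congr rfl fun t _ => ?_
  rw [Finset.sum_congr rfl (g := fun _ => χ t.1 * ψ t.2) fun c hc => by
    rw [(Finset.mem_filter.mp hc).2], Finset.filter_filter]
  simp [normTraceFiber, g, mul_comm]

lemma card_le_sum_card_normTraceFiber_add [DecidableEq F] (U V : F) :
    Fintype.card K ≤ ∑ t ∈ ({0}ᶜ : Finset F) ×ˢ (Finset.univ : Finset F),
      (normTraceFiber K U V t).card + 3 := by
  classical
  have hfiberwise : (Finset.univ.filter fun c : K => c + c⁻¹ ≠ 0).card =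
      ∑ t ∈ ({0}ᶜ : Finset F) ×ˢ (Finset.univ : Finset F), (normTraceFiber K U V t).card := by
    rw [Finset.card_eq_sum_card_fiberwise (t := ({0}ᶜ : Finset F) ×ˢ Finset.univ)
      (f := fun c => (Algebra.norm F (c + c⁻¹), Algebra.trace F K (U • c + V • c⁻¹)))
      fun c hc => by simpa [Algebra.norm_eq_zero_iff] using hc]
    exact Finset.sum_congr rfl fun t _ => congrArg Finset.card (by ext; simp [normTraceFiber])
  rw [← hfiberwise, ← Finset.card_univ,
    ← Finset.card_filter_add_card_filter_not fun c : K => c + c⁻¹ = 0, add_comm]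
  exact Nat.add_le_add_left card_add_inv_eq_zero_le _

lemma norm_mixedCharSum_le_of_three_le (hχψ : χ ≠ 1 ∨ ψ ≠ 1) {m : ℕ} (hm : 3 ≤ m)
    (hfinrank : Module.finrank F K = 2 * m) {U : F} (hU : U ≠ 0) (V : F) :
    ‖mixedCharSum F K χ ψ U V‖ ≤
      (pointCountConst (Fintype.card F) + 3) * (Fintype.card F : ℝ) ^ m := by
  classical
  let T : Finset (F × F) := {0}ᶜ ×ˢ Finset.univ
  have hcardT : (T.card : ℝ) = ((Fintype.card F - 1) * Fintype.card F : ℕ) := by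
    simp [T, Finset.card_compl]
  have hTpos : (0 : ℝ) < T.card := by
    rw [hcardT]
    exact_mod_cast Nat.mul_pos (Nat.sub_pos_of_lt Fintype.one_lt_card) Fintype.card_pos
  have hfiber : ∀ t ∈ T, ((normTraceFiber K U V t).card : ℝ) ≤
      ((Fintype.card F : ℝ) ^ (2 * m) +
        pointCountConst (Fintype.card F) * (Fintype.card F : ℝ) ^ m) / T.card := by
    intro t ht
    rw [le_div_iff₀' hTpos, hcardT]
    exact_mod_cast card_mul_le_card_sq_add hm hfinrank hU V (α := t.1) (β := t.2)
      (S := normTraceFiber K U V t) (by simpa [T] using ht)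
      (fun c hc => Prod.ext_iff.mp (Finset.mem_filter.mp hc).2.2)
  have htotal : (Fintype.card F : ℝ) ^ (2 * m) ≤
      ∑ t ∈ T, ((normTraceFiber K U V t).card : ℝ) + 3 := by
    rw [← hfinrank]
    exact_mod_cast Module.card_eq_pow_finrank (K := F) (V := K) ▸
      card_le_sum_card_normTraceFiber_add U V
  have hone : (1 : ℝ) ≤ (Fintype.card F : ℝ) ^ m :=
    one_le_pow₀ (mod_cast Fintype.card_pos)
  rw [mixedCharSum_eq_sum_card_normTraceFiber]
  refine (norm_sum_mul_le_card_mul_sub_sum T (sum_mulChar_mul_addChar_eq_zero hχψ)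
    (fun t _ => ?_) hfiber).trans ?_
  · rw [norm_mul, AddChar.norm_apply, mul_one]
    exact norm_mulChar_apply_le_one _ _
  · rw [mul_div_cancel₀ _ hTpos.ne']
    linarith

lemma norm_mixedCharSum_le (hχψ : χ ≠ 1 ∨ ψ ≠ 1) {m : ℕ}
    (hfinrank : Module.finrank F K = 2 * m) {U : F} (hU : U ≠ 0) (V : F) :
    ‖mixedCharSum F K χ ψ U V‖ ≤ (pointCountConst (Fintype.card F) + 3 + Fintype.card F ^ 2) *
      (Fintype.card F : ℝ) ^ m := by
  rcases le_or_gt 3 m with hm | hm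
  · refine (norm_mixedCharSum_le_of_three_le hχψ hm hfinrank hU V).trans ?_
    exact mul_le_mul_of_nonneg_right (le_add_of_nonneg_right (by positivity)) (by positivity)
  · calc ‖mixedCharSum F K χ ψ U V‖ ≤ (Fintype.card F : ℝ) ^ m * (Fintype.card F : ℝ) ^ m := by
          rw [← pow_add, ← two_mul, ← hfinrank]
          exact_mod_cast Module.card_eq_pow_finrank (K := F) (V := K) ▸
            norm_mixedCharSum_le_card (K := K) χ ψ U V
      _ ≤ (Fintype.card F : ℝ) ^ 2 * (Fintype.card F : ℝ) ^ m := by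
          gcongr
          · exact_mod_cast Fintype.card_pos
          · omega
      _ ≤ _ := by
          gcongr
          exact le_add_of_nonneg_left (by positivity)

end MixedCharSum

/-! ### Functions of the roots of a polynomial -/

section RootFunctionals

variable {R S : Type*} [Field R] [Field S]

/-- A square root of `-1` in the ring of `2 × 2` matrices, available in every characteristic. -/
def sqrtNegOneMatrix (R : Type*) [Field R] : Matrix (Fin 2) (Fin 2) R := !![0, -1; 1, 0]

/-- The resultant of `h` with `X ^ 2 + 1`, i.e. `∏ (r ^ 2 + 1)` over the roots `r` of a monic `h`,
encoded as the determinant of `h` evaluated at a square root of `-1`. -/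
noncomputable def resultantSqAddOne (h : R[X]) : R := (aeval (sqrtNegOneMatrix R) h).det

/-- The product of `r + r⁻¹` over the roots `r` of the monic polynomial `h`. -/
noncomputable def rootProdAddInv (h : R[X]) : R :=
  resultantSqAddOne h * ((-1) ^ h.natDegree * h.coeff 0)⁻¹

/-- The sum of `U r + V r⁻¹` over the roots `r` of the monic polynomial `h`, provided that
`h.coeff 0 ≠ 0`. -/
noncomputable def rootSum (U V : R) (h : R[X]) : R :=
  -U * h.nextCoeff - V * h.coeff 1 / h.coeff 0

lemma resultantSqAddOne_mul (f g : R[X]) :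
    resultantSqAddOne (f * g) = resultantSqAddOne f * resultantSqAddOne g := by
  simp only [resultantSqAddOne, map_mul, Matrix.det_mul]

lemma aeval_sqrtNegOneMatrix_X_sq_add_one : aeval (sqrtNegOneMatrix R) (X ^ 2 + 1 : R[X]) = 0 := by
  ext i j
  fin_cases i <;> fin_cases j <;> simp [sqrtNegOneMatrix, pow_two]

lemma resultantSqAddOne_add_mul (f g : R[X]) :
    resultantSqAddOne (f + g * (X ^ 2 + 1)) = resultantSqAddOne f := by
  rw [resultantSqAddOne, map_add, map_mul, aeval_sqrtNegOneMatrix_X_sq_add_one, mul_zero, add_zero,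
    resultantSqAddOne]

lemma resultantSqAddOne_X_sub_C (r : R) : resultantSqAddOne (X - C r) = r ^ 2 + 1 := by
  have haeval : aeval (sqrtNegOneMatrix R) (X - C r) = !![-r, -1; 1, -r] := by
    ext i j
    fin_cases i <;> fin_cases j <;> simp [sqrtNegOneMatrix, Matrix.algebraMap_matrix_apply]
  rw [resultantSqAddOne, haeval, Matrix.det_fin_two_of]
  ring

lemma resultantSqAddOne_map (φ : R →+* S) (h : R[X]) :
    resultantSqAddOne (h.map φ) = φ (resultantSqAddOne h) := by
  have hmatrix : φ.mapMatrix (sqrtNegOneMatrix R) = sqrtNegOneMatrix S := by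
    ext i j
    fin_cases i <;> fin_cases j <;> simp [sqrtNegOneMatrix]
  rw [resultantSqAddOne, resultantSqAddOne, RingHom.map_det, aeval_def, aeval_def, eval₂_map,
    hom_eval₂, hmatrix]
  congr 2
  ext c i j
  by_cases hij : i = j <;> simp [Matrix.algebraMap_matrix_apply, hij]

lemma rootProdAddInv_one : rootProdAddInv (1 : R[X]) = 1 := by
  simp [rootProdAddInv, resultantSqAddOne]

lemma rootProdAddInv_mul {f g : R[X]} (hf : f.Monic) (hg : g.Monic) :
    rootProdAddInv (f * g) = rootProdAddInv f * rootProdAddInv g := by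
  simp only [rootProdAddInv, resultantSqAddOne_mul, hf.natDegree_mul hg, mul_coeff_zero, pow_add,
    mul_inv]
  ring

lemma rootProdAddInv_eq_zero {f : R[X]} (hf : f.coeff 0 = 0) : rootProdAddInv f = 0 := by
  simp [rootProdAddInv, hf]

lemma rootProdAddInv_map (φ : R →+* S) (h : R[X]) :
    rootProdAddInv (h.map φ) = φ (rootProdAddInv h) := by
  simp [rootProdAddInv, resultantSqAddOne_map]

lemma rootProdAddInv_X_sub_C (r : R) : rootProdAddInv (X - C r) = r + r⁻¹ := by
  rcases eq_or_ne r 0 with rfl | hr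
  · simp [rootProdAddInv]
  · simp only [rootProdAddInv, resultantSqAddOne_X_sub_C, natDegree_X_sub_C, coeff_sub,
      coeff_X_zero, coeff_C_zero]
    field_simp
    ring

lemma rootProdAddInv_prod_X_sub_C (s : Multiset R) :
    rootProdAddInv (s.map fun r => X - C r).prod = (s.map fun r => r + r⁻¹).prod := by
  induction s using Multiset.induction_on with
  | empty => simp [rootProdAddInv_one]
  | cons a s ih =>
    rw [Multiset.map_cons, Multiset.prod_cons, rootProdAddInv_mul (monic_X_sub_C a)
      (monic_multisetProd_X_sub_C s), ih, rootProdAddInv_X_sub_C, Multiset.map_cons,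
      Multiset.prod_cons]

lemma rootSum_one (U V : R) : rootSum U V 1 = 0 := by
  simp [rootSum, nextCoeff, coeff_one]

lemma rootSum_mul (U V : R) {f g : R[X]} (hf : f.Monic) (hg : g.Monic) (hf0 : f.coeff 0 ≠ 0)
    (hg0 : g.coeff 0 ≠ 0) : rootSum U V (f * g) = rootSum U V f + rootSum U V g := by
  simp only [rootSum, hf.nextCoeff_mul hg, mul_coeff_zero, mul_coeff_one]
  field_simp
  ring

lemma rootSum_map (φ : R →+* S) (U V : R) (h : R[X]) :
    rootSum (φ U) (φ V) (h.map φ) = φ (rootSum U V h) := by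
  simp [rootSum, nextCoeff_map φ.injective]

lemma rootSum_X_sub_C (U V r : R) : rootSum U V (X - C r) = U * r + V * r⁻¹ := by
  simp [rootSum, nextCoeff_X_sub_C, div_eq_mul_inv]

lemma coeff_zero_prod_X_sub_C_ne_zero {s : Multiset R} (hs : 0 ∉ s) :
    (s.map fun r => X - C r).prod.coeff 0 ≠ 0 := by
  rw [coeff_zero_multiset_prod, Multiset.map_map, ne_eq, Multiset.prod_eq_zero_iff]
  simpa using hs

lemma rootSum_prod_X_sub_C (U V : R) {s : Multiset R} (hs : 0 ∉ s) :
    rootSum U V (s.map fun r => X - C r).prod = (s.map fun r => U * r + V * r⁻¹).sum := by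
  induction s using Multiset.induction_on with
  | empty => simp [rootSum_one]
  | cons a s ih =>
    rw [Multiset.mem_cons, not_or] at hs
    have ha : (X - C a : R[X]).coeff 0 ≠ 0 := by simpa using Ne.symm hs.1
    rw [Multiset.map_cons, Multiset.prod_cons, rootSum_mul U V (monic_X_sub_C a)
      (monic_multisetProd_X_sub_C s) ha (coeff_zero_prod_X_sub_C_ne_zero hs.2), ih hs.2,
      rootSum_X_sub_C, Multiset.map_cons, Multiset.sum_cons]

end RootFunctionals

section PowerBasis

variable {F L : Type*} [Field F] [Field L] [Algebra F L] [FiniteDimensional F L]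
  [Algebra.IsSeparable F L] {Ω : Type*} [Field Ω] [Algebra F Ω]

lemma map_embeddings_gen_eq_aroots (pb : PowerBasis F L) :
    (Finset.univ.val.map fun σ : L →ₐ[F] Ω => σ pb.gen) = (minpoly F pb.gen).aroots Ω := by
  have hne : minpoly F pb.gen ≠ 0 := minpoly.ne_zero (Algebra.IsIntegral.isIntegral _)
  refine (Multiset.Nodup.ext ?_ ?_).mpr fun r => ?_
  · exact Finset.univ.nodup.map fun σ τ h => pb.algHom_ext h
  · exact nodup_roots (Separable.map (Algebra.IsSeparable.isSeparable F _))
  · rw [Multiset.mem_map, mem_aroots]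
    constructor
    · rintro ⟨σ, -, rfl⟩
      exact ⟨hne, by rw [aeval_algHom_apply, minpoly.aeval, map_zero]⟩
    · rintro ⟨-, hr⟩
      exact ⟨pb.lift r hr, Finset.mem_univ _, pb.lift_gen r hr⟩

lemma map_minpoly_gen_eq_prod_embeddings (Ω : Type*) [Field Ω] [Algebra F Ω] [IsAlgClosed Ω]
    (pb : PowerBasis F L) :
    (minpoly F pb.gen).map (algebraMap F Ω) =
      ((Finset.univ.val.map fun σ : L →ₐ[F] Ω => σ pb.gen).map fun r => X - C r).prod := by
  rw [map_embeddings_gen_eq_aroots]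
  exact (IsAlgClosed.splits _).eq_prod_roots_of_monic
    ((minpoly.monic (Algebra.IsIntegral.isIntegral _)).map _)

lemma rootProdAddInv_minpoly_gen (pb : PowerBasis F L) :
    rootProdAddInv (minpoly F pb.gen) = Algebra.norm F (pb.gen + pb.gen⁻¹) := by
  apply (algebraMap F (AlgebraicClosure F)).injective
  rw [← rootProdAddInv_map, map_minpoly_gen_eq_prod_embeddings, rootProdAddInv_prod_X_sub_C,
    Algebra.norm_eq_prod_embeddings, Multiset.map_map]
  simp

lemma rootSum_minpoly_gen (U V : F) (pb : PowerBasis F L) (hgen : pb.gen ≠ 0) :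
    rootSum U V (minpoly F pb.gen) = Algebra.trace F L (U • pb.gen + V • pb.gen⁻¹) := by
  apply (algebraMap F (AlgebraicClosure F)).injective
  rw [← rootSum_map, map_minpoly_gen_eq_prod_embeddings, rootSum_prod_X_sub_C _ _ (by simp [hgen]),
    trace_eq_sum_embeddings, Multiset.map_map]
  simp [Algebra.smul_def]

end PowerBasis

section PolyWeight

variable {F : Type*} [Field F]

/-- The function `h ↦ χ (∏ (r + r⁻¹)) ψ (∑ (U r + V r⁻¹))` of the roots `r` of a monic polynomial,
the completely multiplicative function whose generating series is the `L`-function. -/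
noncomputable def polyWeight (χ : MulChar F ℂ) (ψ : AddChar F ℂ) (U V : F) (h : F[X]) : ℂ :=
  χ (rootProdAddInv h) * ψ (rootSum U V h)

/-- The characteristic polynomial over `F` of multiplication by `x` on the finite extension `K`,
encoded as a power of the minimal polynomial. -/
noncomputable def elementCharpoly (F : Type*) [Field F] {K : Type*} [Field K] [Algebra F K]
    (x : K) : F[X] :=
  minpoly F x ^ (Module.finrank F K / (minpoly F x).natDegree)

section Multiplicativity

variable (χ : MulChar F ℂ) (ψ : AddChar F ℂ) (U V : F)

lemma polyWeight_one : polyWeight χ ψ U V 1 = 1 := by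
  simp [polyWeight, rootProdAddInv_one, rootSum_one]

lemma polyWeight_eq_zero {f : F[X]} (hf : f.coeff 0 = 0) : polyWeight χ ψ U V f = 0 := by
  rw [polyWeight, rootProdAddInv_eq_zero hf, χ.map_zero, zero_mul]

lemma polyWeight_mul {f g : F[X]} (hf : f.Monic) (hg : g.Monic) :
    polyWeight χ ψ U V (f * g) = polyWeight χ ψ U V f * polyWeight χ ψ U V g := by
  by_cases hf0 : f.coeff 0 = 0
  · rw [polyWeight_eq_zero _ _ _ _ (by rw [mul_coeff_zero, hf0, zero_mul]),
      polyWeight_eq_zero _ _ _ _ hf0, zero_mul]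
  by_cases hg0 : g.coeff 0 = 0
  · rw [polyWeight_eq_zero _ _ _ _ (by rw [mul_coeff_zero, hg0, mul_zero]),
      polyWeight_eq_zero _ _ _ _ hg0, mul_zero]
  · rw [polyWeight, rootProdAddInv_mul hf hg, rootSum_mul U V hf hg hf0 hg0, map_mul,
      AddChar.map_add_eq_mul, mul_mul_mul_comm, polyWeight, polyWeight]

lemma polyWeight_pow {f : F[X]} (hf : f.Monic) (k : ℕ) :
    polyWeight χ ψ U V (f ^ k) = polyWeight χ ψ U V f ^ k := by
  induction k with
  | zero => rw [pow_zero, pow_zero, polyWeight_one]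
  | succ k ih => rw [pow_succ, polyWeight_mul _ _ _ _ (hf.pow k) hf, ih, pow_succ]

end Multiplicativity

section ElementCharpoly

variable {K : Type*} [Field K] [Algebra F K] [FiniteDimensional F K]

lemma elementCharpoly_monic (x : K) : (elementCharpoly F x).Monic :=
  (minpoly.monic (Algebra.IsIntegral.isIntegral x)).pow _

lemma natDegree_elementCharpoly (x : K) :
    (elementCharpoly F x).natDegree = Module.finrank F K := by
  rw [elementCharpoly, (minpoly.monic (Algebra.IsIntegral.isIntegral x)).natDegree_pow]
  exact Nat.div_mul_cancel (minpoly.degree_dvd (Algebra.IsIntegral.isIntegral x))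

lemma minpoly_dvd_elementCharpoly (x : K) : minpoly F x ∣ elementCharpoly F x := by
  have hxint : IsIntegral F x := Algebra.IsIntegral.isIntegral x
  exact dvd_pow_self _ (Nat.div_pos (Nat.le_of_dvd Module.finrank_pos (minpoly.degree_dvd hxint))
    (minpoly.natDegree_pos hxint)).ne'

open IntermediateField

lemma elementCharpoly_eq_minpoly_pow_finrank (x : K) :
    elementCharpoly F x = minpoly F x ^ Module.finrank F⟮x⟯ K := by
  have hxint : IsIntegral F x := Algebra.IsIntegral.isIntegral x
  rw [elementCharpoly, ← Module.finrank_mul_finrank F F⟮x⟯ K, adjoin.finrank hxint,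
    Nat.mul_div_cancel_left _ (minpoly.natDegree_pos hxint)]

lemma polyWeight_elementCharpoly [Algebra.IsSeparable F K] (χ : MulChar F ℂ) (ψ : AddChar F ℂ)
    (U V : F) (x : K) :
    polyWeight χ ψ U V (elementCharpoly F x) =
      χ (Algebra.norm F (x + x⁻¹)) * ψ (Algebra.trace F K (U • x + V • x⁻¹)) := by
  have hxint : IsIntegral F x := Algebra.IsIntegral.isIntegral x
  rcases eq_or_ne x 0 with rfl | hx
  · have hcoeff : (elementCharpoly F (0 : K)).coeff 0 = 0 := by
      rw [← X_dvd_iff, ← minpoly.zero F K]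
      exact minpoly_dvd_elementCharpoly 0
    rw [polyWeight_eq_zero _ _ _ _ hcoeff, inv_zero, add_zero, Algebra.norm_zero, χ.map_zero,
      zero_mul]
  let pb := adjoin.powerBasis hxint
  let k := Module.finrank F⟮x⟯ K
  have hgen : algebraMap F⟮x⟯ K pb.gen = x := AdjoinSimple.algebraMap_gen F x
  have hminpoly : minpoly F x = minpoly F pb.gen := (minpoly_gen F x).symm
  have hne : pb.gen ≠ 0 := fun h => hx (by rw [← hgen, h, map_zero])
  have hnorm : Algebra.norm F (x + x⁻¹) = Algebra.norm F (pb.gen + pb.gen⁻¹) ^ k := by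
    have hmap : x + x⁻¹ = algebraMap F⟮x⟯ K (pb.gen + pb.gen⁻¹) := by rw [map_add, map_inv₀, hgen]
    rw [hmap, ← Algebra.norm_norm (S := F⟮x⟯), Algebra.norm_algebraMap, map_pow]
  have htrace : Algebra.trace F K (U • x + V • x⁻¹) =
      k • Algebra.trace F F⟮x⟯ (U • pb.gen + V • pb.gen⁻¹) := by
    have hmap : U • x + V • x⁻¹ = algebraMap F⟮x⟯ K (U • pb.gen + V • pb.gen⁻¹) := by
      simp only [Algebra.smul_def, map_add, map_mul, map_inv₀, hgen,
        ← IsScalarTower.algebraMap_apply F F⟮x⟯ K]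
    rw [hmap, ← Algebra.trace_trace (S := F⟮x⟯), Algebra.trace_algebraMap, map_nsmul]
  rw [elementCharpoly_eq_minpoly_pow_finrank, polyWeight_pow _ _ _ _ (minpoly.monic hxint),
    hminpoly, polyWeight, rootProdAddInv_minpoly_gen, rootSum_minpoly_gen U V pb hne, hnorm, htrace,
    map_pow, AddChar.map_nsmul_eq_pow, mul_pow]

end ElementCharpoly

end PolyWeight

section MonicsOfDegree

variable (F : Type*) [Field F] [Finite F]

lemma finite_setOf_monic_natDegree_eq (k : ℕ) : {h : F[X] | h.Monic ∧ h.natDegree = k}.Finite := by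
  have : Finite (degreeLT F (k + 1)) := Finite.of_equiv _ (degreeLTEquiv F (k + 1)).symm.toEquiv
  refine (Set.toFinite (degreeLT F (k + 1) : Set F[X])).subset ?_
  rintro h ⟨hmonic, rfl⟩
  rw [SetLike.mem_coe, mem_degreeLT, degree_eq_natDegree hmonic.ne_zero]
  exact_mod_cast Nat.lt_succ_self _

/-- The finite set of monic polynomials of degree `k`. -/
noncomputable def monicsOfDegree (k : ℕ) : Finset F[X] :=
  (finite_setOf_monic_natDegree_eq F k).toFinset

variable {F}

lemma mem_monicsOfDegree {k : ℕ} {h : F[X]} :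
    h ∈ monicsOfDegree F k ↔ h.Monic ∧ h.natDegree = k := by
  simp [monicsOfDegree]

lemma monicsOfDegree_zero : monicsOfDegree F 0 = {1} := by
  ext h
  rw [mem_monicsOfDegree, Finset.mem_singleton]
  exact ⟨fun h => eq_one_of_monic_natDegree_zero h.1 h.2, by rintro rfl; simp⟩

lemma add_mem_monicsOfDegree {k : ℕ} {h g : F[X]} (hh : h ∈ monicsOfDegree F k)
    (hg : g.degree < k) : h + g ∈ monicsOfDegree F k := by
  obtain ⟨hmonic, rfl⟩ := mem_monicsOfDegree.mp hh
  rw [← degree_eq_natDegree hmonic.ne_zero] at hg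
  exact mem_monicsOfDegree.mpr
    ⟨hmonic.add_of_left hg, natDegree_add_eq_left_of_degree_lt hg⟩

end MonicsOfDegree

/-! ### The `L`-function -/

section EulerProduct

lemma card_filter_range_dvd_div_le {e m k : ℕ} (he : 0 < e) (hk : e * m ≤ k) :
    ((Finset.range k).filter fun i => e ∣ i + 1 ∧ (i + 1) / e ≤ m).card = m := by
  have heq : ((Finset.range k).filter fun i => e ∣ i + 1 ∧ (i + 1) / e ≤ m) =
      (Finset.range (e * m)).filter fun i => e ∣ i + 1 := by
    ext i
    simp only [Finset.mem_filter, Finset.mem_range]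
    constructor
    · rintro ⟨-, ⟨c, hc⟩, hle⟩
      rw [hc, Nat.mul_div_cancel_left _ he] at hle
      have hlt : i + 1 ≤ e * m := hc.trans_le (Nat.mul_le_mul_left e hle)
      exact ⟨hlt, c, hc⟩
    · rintro ⟨hi, hdvd⟩
      exact ⟨hi.trans_le hk, hdvd, Nat.div_le_of_le_mul hi⟩
  rw [heq, Nat.card_multiples, Nat.mul_div_cancel_left _ he]

section Factorization

open UniqueFactorizationMonoid

variable {F : Type*} [Field F]

lemma monic_of_mem_normalizedFactors [DecidableEq F] {h P : F[X]} (hP : P ∈ normalizedFactors h) :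
    P.Monic := by
  rw [← normalize_normalized_factor P hP]
  exact monic_normalize (irreducible_of_normalized_factor P hP).ne_zero

lemma pow_dvd_iff_le_count_normalizedFactors [DecidableEq F] {h P : F[X]} (hh : h ≠ 0)
    (hP : P ∈ normalizedFactors h) (r : ℕ) : P ^ r ∣ h ↔ r ≤ (normalizedFactors h).count P := by
  rw [pow_dvd_iff_le_emultiplicity, emultiplicity_eq_count_normalizedFactors
    (irreducible_of_normalized_factor P hP) hh, normalize_normalized_factor P hP, Nat.cast_le]

lemma sum_count_mul_natDegree_normalizedFactors [DecidableEq F] {h : F[X]} (hh : h.Monic) :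
    ∑ P ∈ (normalizedFactors h).toFinset, (normalizedFactors h).count P * P.natDegree =
      h.natDegree := by
  have hprod : (normalizedFactors h).prod = h := by
    rw [prod_normalizedFactors_eq hh.ne_zero, hh.normalize_eq_self]
  conv_rhs => rw [← hprod, natDegree_multiset_prod_of_monic _ fun P hP =>
    monic_of_mem_normalizedFactors hP, Finset.sum_multiset_map_count]
  simp only [smul_eq_mul]

end Factorization

variable {F : Type*} [Field F] [Finite F]

lemma splits_map_of_natDegree_dvd_finrank {K : Type*} [Field K] [Finite K] [Algebra F K] {P : F[X]}
    (hP : Irreducible P) (hdvd : P.natDegree ∣ Module.finrank F K) :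
    (P.map (algebraMap F K)).Splits := by
  have := Fintype.ofFinite F
  have := Fintype.ofFinite K
  rw [hP.natDegree_dvd_iff_dvd_X_pow_card_pow_sub_X, Nat.card_eq_fintype_card,
    ← Module.card_eq_pow_finrank] at hdvd
  refine Splits.of_dvd (FiniteField.isSplittingField_sub K F).splits ?_
    (Polynomial.map_dvd (algebraMap F K) hdvd)
  simpa using FiniteField.X_pow_card_sub_X_ne_zero K Fintype.one_lt_card

open Classical in
lemma card_filter_minpoly_eq {K : Type*} [Field K] [Fintype K] [Algebra F K] {P : F[X]}
    (hP : Irreducible P) (hmonic : P.Monic) :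
    (Finset.univ.filter fun x : K => minpoly F x = P).card =
      if P.natDegree ∣ Module.finrank F K then P.natDegree else 0 := by
  split_ifs with hdvd
  · rw [← card_rootSet_eq_natDegree (PerfectField.separable_of_irreducible hP)
      (splits_map_of_natDegree_dvd_finrank hP hdvd), Fintype.card_subtype]
    congr 1
    ext x
    simp only [Finset.mem_filter, Finset.mem_univ, true_and, mem_rootSet]
    constructor
    · rintro rfl
      exact ⟨hmonic.ne_zero, minpoly.aeval _ _⟩
    · rintro ⟨-, hroot⟩
      exact (minpoly.eq_of_irreducible_of_monic hP hroot hmonic).symm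
  · rw [Finset.card_eq_zero, Finset.filter_eq_empty_iff]
    rintro x - rfl
    exact hdvd (minpoly.degree_dvd (Algebra.IsIntegral.isIntegral x))

open Classical UniqueFactorizationMonoid in
lemma card_filter_elementCharpoly_dvd {K : Type*} [Field K] [Fintype K] [Algebra F K] {h : F[X]}
    (hh : h ≠ 0) :
    (Finset.univ.filter fun x : K => elementCharpoly F x ∣ h).card =
      ∑ P ∈ (normalizedFactors h).toFinset,
        if P.natDegree ∣ Module.finrank F K ∧
            Module.finrank F K / P.natDegree ≤ (normalizedFactors h).count P
        then P.natDegree else 0 := by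
  have hmaps : ∀ x ∈ Finset.univ.filter fun x : K => elementCharpoly F x ∣ h,
      minpoly F x ∈ (normalizedFactors h).toFinset := fun x hx => by
    have hxint : IsIntegral F x := Algebra.IsIntegral.isIntegral x
    rw [Multiset.mem_toFinset, mem_normalizedFactors_iff' hh]
    exact ⟨minpoly.irreducible hxint, (minpoly.monic hxint).normalize_eq_self,
      (minpoly_dvd_elementCharpoly x).trans (Finset.mem_filter.mp hx).2⟩
  rw [Finset.card_eq_sum_card_fiberwise hmaps]
  refine Finset.sum_congr rfl fun P hP => ?_
  rw [Multiset.mem_toFinset] at hP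
  have hcard := card_filter_minpoly_eq (K := K) (irreducible_of_normalized_factor P hP)
    (monic_of_mem_normalizedFactors hP)
  have hdvd : ∀ x : K, minpoly F x = P → (elementCharpoly F x ∣ h ↔
      Module.finrank F K / P.natDegree ≤ (normalizedFactors h).count P) := by
    rintro x rfl
    exact pow_dvd_iff_le_count_normalizedFactors hh hP _
  by_cases hle : Module.finrank F K / P.natDegree ≤ (normalizedFactors h).count P
  · simp only [hle, and_true, ← hcard, Finset.filter_filter]
    congr 1
    ext x
    simpa using fun hx => (hdvd x hx).mpr hle
  · simp only [hle, and_false, if_false, Finset.card_eq_zero, Finset.filter_eq_empty_iff]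
    exact fun x hx hxP => hle ((hdvd x hxP).mp (Finset.mem_filter.mp hx).2)

open Classical UniqueFactorizationMonoid in
/-- The logarithmic derivative of the Euler product, coefficient by coefficient: a factor `P ^ r`
of `h` is the characteristic polynomial of the `deg P` roots of `P` in degree `r * deg P`. -/
lemma sum_card_filter_elementCharpoly_dvd {K : ℕ → Type*} [∀ i, Field (K i)]
    [∀ i, Fintype (K i)] [∀ i, Algebra F (K i)] (hK : ∀ i, Module.finrank F (K i) = i + 1)
    {h : F[X]} (hh : h.Monic) :
    ∑ i ∈ Finset.range h.natDegree,
      (Finset.univ.filter fun x : K i => elementCharpoly F x ∣ h).card = h.natDegree := by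
  have hsum := sum_count_mul_natDegree_normalizedFactors hh
  simp only [card_filter_elementCharpoly_dvd hh.ne_zero, hK]
  rw [Finset.sum_comm]
  conv_rhs => rw [← hsum]
  refine Finset.sum_congr rfl fun P hP => ?_
  rw [← Finset.sum_filter, Finset.sum_const, smul_eq_mul, card_filter_range_dvd_div_le]
  · exact (irreducible_of_normalized_factor P (Multiset.mem_toFinset.mp hP)).natDegree_pos
  · rw [← hsum, mul_comm]
    exact Finset.single_le_sum
      (f := fun P => (normalizedFactors h).count P * P.natDegree) (fun _ _ => Nat.zero_le _) hP

end EulerProduct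

section LFunction

lemma sum_eq_zero_of_comp_eq_mul {α : Type*} (s : Finset α) {f : α → ℂ} {τ : α → α} {c : ℂ}
    (hc : c ≠ 1) (hmaps : Set.MapsTo τ s s) (hinj : Set.InjOn τ s)
    (hτ : ∀ x ∈ s, f (τ x) = c * f x) : ∑ x ∈ s, f x = 0 := by
  have hsurj : Set.SurjOn τ s s := Finset.surjOn_of_injOn_of_card_le τ hmaps hinj le_rfl
  have hmul : c * ∑ x ∈ s, f x = ∑ x ∈ s, f x := by
    rw [Finset.mul_sum]
    exact Finset.sum_nbij τ hmaps hinj hsurj fun x hx => (hτ x hx).symm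
  by_contra hsum
  exact hc (mul_right_cancel₀ hsum (hmul.trans (one_mul _).symm))

lemma degree_C_mul_X_pow_mul_X_sq_add_one_lt {F : Type*} [Field F] (c : F) (j : ℕ) :
    (C c * X ^ j * (X ^ 2 + 1)).degree < ((j + 3 : ℕ) : WithBot ℕ) := by
  have hdeg : (C c * X ^ j * (X ^ 2 + 1)).degree ≤ ((j + 2 : ℕ) : WithBot ℕ) := by
    compute_degree
    exact le_rfl
  exact hdeg.trans_lt (by exact_mod_cast Nat.lt_succ_self _)

variable {F : Type*} [Field F] [Finite F]

/-- The coefficient of `T ^ k` in the `L`-function `∑ polyWeight h * T ^ deg h` over monic `h`. -/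
noncomputable def lCoeff (χ : MulChar F ℂ) (ψ : AddChar F ℂ) (U V : F) (k : ℕ) : ℂ :=
  ∑ h ∈ monicsOfDegree F k, polyWeight χ ψ U V h

section

variable (χ : MulChar F ℂ) (ψ : AddChar F ℂ) (U V : F)

lemma lCoeff_zero : lCoeff χ ψ U V 0 = 1 := by
  rw [lCoeff, monicsOfDegree_zero, Finset.sum_singleton, polyWeight_one]

lemma lCoeff_one [Fintype F] :
    lCoeff χ ψ U V 1 = ∑ x : F, χ (x + x⁻¹) * ψ (U * x + V * x⁻¹) := by
  symm
  refine Finset.sum_bij (fun x _ => X - C x) (fun x _ => ?_) (fun x _ y _ hxy => ?_)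
    (fun h hh => ?_) (fun x _ => ?_)
  · exact mem_monicsOfDegree.mpr ⟨monic_X_sub_C x, natDegree_X_sub_C x⟩
  · simpa using hxy
  · obtain ⟨hmonic, hdeg⟩ := mem_monicsOfDegree.mp hh
    refine ⟨-h.coeff 0, Finset.mem_univ _, ?_⟩
    rw [C_neg, sub_neg_eq_add]
    exact (hmonic.eq_X_add_C hdeg).symm
  · rw [polyWeight, rootProdAddInv_X_sub_C, rootSum_X_sub_C]

open Classical in
lemma sum_polyWeight_filter_dvd {g : F[X]} (hg : g.Monic) {k : ℕ} (hk : g.natDegree ≤ k) :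
    ∑ h ∈ (monicsOfDegree F k).filter (g ∣ ·), polyWeight χ ψ U V h =
      polyWeight χ ψ U V g * lCoeff χ ψ U V (k - g.natDegree) := by
  rw [lCoeff, Finset.mul_sum]
  symm
  refine Finset.sum_bij (fun h _ => g * h) (fun h hh => ?_)
    (fun h _ h' _ heq => mul_left_cancel₀ hg.ne_zero heq) (fun h hh => ?_) (fun h hh => ?_)
  · obtain ⟨hmonic, hdeg⟩ := mem_monicsOfDegree.mp hh
    rw [Finset.mem_filter, mem_monicsOfDegree, hg.natDegree_mul hmonic, hdeg]
    exact ⟨⟨hg.mul hmonic, Nat.add_sub_cancel' hk⟩, dvd_mul_right _ _⟩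
  · rw [Finset.mem_filter, mem_monicsOfDegree] at hh
    obtain ⟨⟨hmonic, hdeg⟩, c, rfl⟩ := hh
    have hc : c.Monic := hg.of_mul_monic_left hmonic
    rw [hg.natDegree_mul hc] at hdeg
    exact ⟨c, mem_monicsOfDegree.mpr ⟨hc, by omega⟩, rfl⟩
  · rw [polyWeight_mul _ _ _ _ hg (mem_monicsOfDegree.mp hh).1]

lemma natCast_mul_lCoeff {K : ℕ → Type*} [∀ i, Field (K i)] [∀ i, Fintype (K i)]
    [∀ i, Algebra F (K i)] (hK : ∀ i, Module.finrank F (K i) = i + 1) (k : ℕ) :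
    k * lCoeff χ ψ U V k = ∑ i ∈ Finset.range k,
      mixedCharSum F (K i) χ ψ U V * lCoeff χ ψ U V (k - (i + 1)) := by
  classical
  have hdouble : k * lCoeff χ ψ U V k = ∑ h ∈ monicsOfDegree F k, ∑ i ∈ Finset.range k,
      ∑ x : K i, if elementCharpoly F x ∣ h then polyWeight χ ψ U V h else 0 := by
    rw [lCoeff, Finset.mul_sum]
    refine Finset.sum_congr rfl fun h hh => ?_
    obtain ⟨hmonic, rfl⟩ := mem_monicsOfDegree.mp hh
    conv_lhs => rw [← sum_card_filter_elementCharpoly_dvd hK hmonic]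
    rw [Nat.cast_sum, Finset.sum_mul]
    refine Finset.sum_congr rfl fun i _ => ?_
    rw [← Finset.sum_filter, Finset.sum_const, nsmul_eq_mul]
  rw [hdouble, Finset.sum_comm]
  refine Finset.sum_congr rfl fun i hi => ?_
  rw [Finset.sum_comm, mixedCharSum, Finset.sum_mul]
  refine Finset.sum_congr rfl fun x _ => ?_
  have hdeg : (elementCharpoly F x).natDegree = i + 1 := by rw [natDegree_elementCharpoly, hK]
  rw [← Finset.sum_filter, sum_polyWeight_filter_dvd χ ψ U V (elementCharpoly_monic x)
    (by rw [hdeg]; exact Finset.mem_range.mp hi), polyWeight_elementCharpoly, hdeg]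

end

lemma rootProdAddInv_add_mul {h g : F[X]} {k : ℕ} (hh : h ∈ monicsOfDegree F k)
    (hg : (g * (X ^ 2 + 1)).degree < (k : WithBot ℕ)) {l : F}
    (hl : (h + g * (X ^ 2 + 1)).coeff 0 = l⁻¹ * h.coeff 0) :
    rootProdAddInv (h + g * (X ^ 2 + 1)) = l * rootProdAddInv h := by
  rw [rootProdAddInv, rootProdAddInv, resultantSqAddOne_add_mul, hl, (mem_monicsOfDegree.mp hh).2,
    (mem_monicsOfDegree.mp (add_mem_monicsOfDegree hh hg)).2]
  simp only [mul_inv, inv_inv]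
  ring

lemma rootSum_add_C_mul_X_pow_mul {h : F[X]} {j : ℕ} (hh : h ∈ monicsOfDegree F (j + 5))
    (U V c : F) :
    rootSum U V (h + C c * X ^ (j + 2) * (X ^ 2 + 1)) = -U * c + rootSum U V h := by
  have hh' := add_mem_monicsOfDegree hh (degree_C_mul_X_pow_mul_X_sq_add_one_lt c (j + 2))
  have hexpand : C c * X ^ (j + 2) * (X ^ 2 + 1) = C c * X ^ (j + 4) + C c * X ^ (j + 2) := by ring
  have hcoeff : ∀ i < 2, (h + C c * X ^ (j + 2) * (X ^ 2 + 1)).coeff i = h.coeff i := by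
    intro i hi
    rw [hexpand, coeff_add, coeff_add, coeff_C_mul_X_pow, coeff_C_mul_X_pow, if_neg (by omega),
      if_neg (by omega), add_zero, add_zero]
  have hnext : (h + C c * X ^ (j + 2) * (X ^ 2 + 1)).nextCoeff = h.nextCoeff + c := by
    have hdeg := (mem_monicsOfDegree.mp hh).2
    have hdeg' := (mem_monicsOfDegree.mp hh').2
    rw [nextCoeff_of_natDegree_pos (by omega), nextCoeff_of_natDegree_pos (by omega), hdeg, hdeg',
      hexpand]
    simp [coeff_X_pow]
  rw [rootSum, rootSum, hnext, hcoeff 0 two_pos, hcoeff 1 one_lt_two]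
  ring

lemma lCoeff_eq_zero_of_addChar_ne_one (χ : MulChar F ℂ) {ψ : AddChar F ℂ} (hψ : ψ ≠ 1) {U : F}
    (hU : U ≠ 0) (V : F) {k : ℕ} (hk : 5 ≤ k) : lCoeff χ ψ U V k = 0 := by
  obtain ⟨c, hc⟩ := AddChar.ne_one_iff.mp hψ
  obtain ⟨j, rfl⟩ := Nat.exists_eq_add_of_le' hk
  have hdeg := degree_C_mul_X_pow_mul_X_sq_add_one_lt (-c / U) (j + 2)
  refine sum_eq_zero_of_comp_eq_mul _ (τ := (· + C (-c / U) * X ^ (j + 2) * (X ^ 2 + 1))) hc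
    (fun h hh => add_mem_monicsOfDegree hh hdeg) (add_left_injective _).injOn fun h hh => ?_
  have hprod := rootProdAddInv_add_mul hh hdeg (l := 1) (by simp [mul_assoc, mul_coeff_zero])
  rw [polyWeight, hprod, one_mul, rootSum_add_C_mul_X_pow_mul hh,
    show -U * (-c / U) = c by field_simp, AddChar.map_add_eq_mul, polyWeight, mul_left_comm]

lemma lCoeff_eq_zero_of_mulChar_ne_one {χ : MulChar F ℂ} (hχ : χ ≠ 1) (U V : F) {k : ℕ}
    (hk : 3 ≤ k) : lCoeff χ 1 U V k = 0 := by
  obtain ⟨l, hl⟩ := MulChar.ne_one_iff.mp hχ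
  let τ (h : F[X]) : F[X] := h + C (((l : F)⁻¹ - 1) * h.coeff 0) * X ^ 0 * (X ^ 2 + 1)
  have hdeg (h : F[X]) :
      (C (((l : F)⁻¹ - 1) * h.coeff 0) * X ^ 0 * (X ^ 2 + 1)).degree < (k : WithBot ℕ) :=
    (degree_C_mul_X_pow_mul_X_sq_add_one_lt _ 0).trans_le (by exact_mod_cast hk)
  have hcoeff (h : F[X]) : (τ h).coeff 0 = (l : F)⁻¹ * h.coeff 0 := by
    simp [τ, mul_coeff_zero, sub_mul]
  have hinj : Function.Injective τ := fun h h' heq => by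
    have h0 : h.coeff 0 = h'.coeff 0 := by
      refine mul_left_cancel₀ (inv_ne_zero l.ne_zero) ?_
      rw [← hcoeff, ← hcoeff, heq]
    exact add_right_cancel (heq.trans (by simp only [τ, h0]))
  refine sum_eq_zero_of_comp_eq_mul _ hl (fun h hh => add_mem_monicsOfDegree hh (hdeg h))
    hinj.injOn fun h hh => ?_
  rw [polyWeight, rootProdAddInv_add_mul hh (hdeg h) (hcoeff h), map_mul, polyWeight,
    AddChar.one_apply, AddChar.one_apply, mul_assoc]

lemma lCoeff_eq_zero {χ : MulChar F ℂ} {ψ : AddChar F ℂ} (hχψ : χ ≠ 1 ∨ ψ ≠ 1) {U : F}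
    (hU : U ≠ 0) (V : F) {k : ℕ} (hk : 5 ≤ k) : lCoeff χ ψ U V k = 0 := by
  rcases eq_or_ne ψ 1 with rfl | hψ
  · exact lCoeff_eq_zero_of_mulChar_ne_one (hχψ.resolve_right (by simp)) U V (by omega)
  · exact lCoeff_eq_zero_of_addChar_ne_one χ hψ hU V hk

end LFunction

/-! ### The Weil bound -/

section PowerSeriesRoots

open Filter Topology

lemma tendsto_sum_mul_pow_eval {R : Type*} [CommSemiring R] [TopologicalSpace R] (p : R[X])
    (z : R) :
    Tendsto (fun n => ∑ i ∈ Finset.range (n + 1), p.coeff i * z ^ i) atTop (𝓝 (p.eval z)) := by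
  refine tendsto_const_nhds.congr' ?_
  filter_upwards [eventually_ge_atTop p.natDegree] with n hn
  exact eval_eq_sum_range' (Nat.lt_succ_of_le hn) z

lemma sum_coeff_mul_pow_of_coe_eq_X_sub_C_mul {R : Type*} [CommRing R] {p : R[X]} {z : R}
    {g : PowerSeries R} (hp : (p : PowerSeries R) = ((X - C z : R[X]) : PowerSeries R) * g)
    (n : ℕ) :
    ∑ i ∈ Finset.range (n + 1), p.coeff i * z ^ i = -z * (z ^ n * PowerSeries.coeff n g) := by
  induction n with
  | zero =>
    have hzero : p.coeff 0 = -z * PowerSeries.coeff 0 g := by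
      rw [← Polynomial.coeff_coe, hp]
      simp [sub_mul]
    simp [hzero]
  | succ n ih =>
    have hsucc : p.coeff (n + 1) = PowerSeries.coeff n g - z * PowerSeries.coeff (n + 1) g := by
      rw [← Polynomial.coeff_coe, hp]
      simp [sub_mul, PowerSeries.coeff_succ_X_mul]
    rw [Finset.sum_range_succ, ih, hsucc]
    ring

lemma eval_eq_zero_of_coe_eq_X_sub_C_mul {p : ℂ[X]} {z : ℂ} {g : PowerSeries ℂ}
    (hp : (p : PowerSeries ℂ) = ((X - C z : ℂ[X]) : PowerSeries ℂ) * g)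
    (hg : Tendsto (fun n => z ^ n * PowerSeries.coeff n g) atTop (𝓝 0)) : p.eval z = 0 := by
  have hlim := tendsto_sum_mul_pow_eval p z
  simp only [sum_coeff_mul_pow_of_coe_eq_X_sub_C_mul hp] at hlim
  simpa using tendsto_nhds_unique hlim (hg.const_mul (-z))

lemma tendsto_pow_mul_coeff_mul (p : ℂ[X]) {g : PowerSeries ℂ} {z : ℂ} {c ρ : ℝ} (hρ : 0 < ρ)
    (hg : ∀ n, ‖PowerSeries.coeff n g‖ ≤ c * ρ ^ n) (hz : ‖z‖ * ρ < 1) :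
    Tendsto (fun n => z ^ n * PowerSeries.coeff n ((p : PowerSeries ℂ) * g)) atTop (𝓝 0) := by
  induction p using Polynomial.induction_on' with
  | add p q hp hq =>
    rw [← add_zero (0 : ℂ)]
    refine (hp.add hq).congr fun n => ?_
    rw [Polynomial.coe_add, add_mul, map_add, mul_add]
  | monomial k a =>
    have hc : 0 ≤ c := by simpa using (norm_nonneg _).trans (hg 0)
    have hgeom : Tendsto (fun n => ‖a‖ * c * (ρ ^ k)⁻¹ * (‖z‖ * ρ) ^ n) atTop (𝓝 0) := by
      simpa using (tendsto_pow_atTop_nhds_zero_of_lt_one (by positivity) hz).const_mul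
        (‖a‖ * c * (ρ ^ k)⁻¹)
    refine squeeze_zero_norm (fun n => ?_) hgeom
    rw [← C_mul_X_pow_eq_monomial, Polynomial.coe_mul, Polynomial.coe_C, Polynomial.coe_pow,
      Polynomial.coe_X, mul_assoc, PowerSeries.coeff_C_mul, norm_mul, norm_mul, norm_pow,
      PowerSeries.coeff_X_pow_mul']
    split_ifs with hk
    · calc ‖z‖ ^ n * (‖a‖ * ‖PowerSeries.coeff (n - k) g‖)
          ≤ ‖z‖ ^ n * (‖a‖ * (c * (ρ ^ n * (ρ ^ k)⁻¹))) := by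
            gcongr
            rw [← pow_sub₀ _ hρ.ne' hk]
            exact hg _
        _ = ‖a‖ * c * (ρ ^ k)⁻¹ * (‖z‖ * ρ) ^ n := by rw [mul_pow]; ring
    · rw [norm_zero, mul_zero, mul_zero]
      positivity

lemma coeff_X_mul_derivative {R : Type*} [CommSemiring R] (p : R[X]) (n : ℕ) :
    (X * derivative p).coeff n = n * p.coeff n := by
  cases n with
  | zero => simp
  | succ n => rw [coeff_X_mul, coeff_derivative, Nat.cast_succ, mul_comm]

/-- Dividing by the full power of `X - C z` in `M`, a root `z` would be a simple pole of `e`,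
against the convergence of `e` at `z`. -/
lemma one_le_norm_root_mul_of_X_mul_derivative_eq {M : ℂ[X]} {e : PowerSeries ℂ} {z : ℂ}
    {c ρ : ℝ} (hρ : 0 < ρ) (he : ∀ n, ‖PowerSeries.coeff n e‖ ≤ c * ρ ^ n) (h0 : M.coeff 0 ≠ 0)
    (hM : ((X * derivative M : ℂ[X]) : PowerSeries ℂ) = M * e) (hz : M.IsRoot z) :
    1 ≤ ‖z‖ * ρ := by
  by_contra! hlt
  have hM0 : M ≠ 0 := by
    rintro rfl
    exact h0 (coeff_zero 0)
  have hz0 : z ≠ 0 := by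
    rintro rfl
    exact h0 (by rwa [coeff_zero_eq_eval_zero])
  obtain ⟨k, hk⟩ := Nat.exists_eq_add_one.mpr ((rootMultiplicity_pos hM0).mpr hz)
  obtain ⟨N, hN, hndvd⟩ := exists_eq_pow_rootMultiplicity_mul_and_not_dvd M hM0 z
  rw [hk] at hN
  have hder : X * derivative M = (X - C z) ^ k *
      ((k + 1 : ℂ[X]) * X * N + X * (X - C z) * derivative N) := by
    rw [hN, derivative_mul, derivative_X_sub_C_pow, C_eq_natCast]
    push_cast
    ring
  have hcancel : (((k + 1 : ℂ[X]) * X * N + X * (X - C z) * derivative N : ℂ[X]) :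
      PowerSeries ℂ) = ((X - C z : ℂ[X]) : PowerSeries ℂ) * ((N : PowerSeries ℂ) * e) := by
    have hne : (((X - C z) ^ k : ℂ[X]) : PowerSeries ℂ) ≠ 0 :=
      Polynomial.coe_eq_zero_iff.not.mpr (pow_ne_zero _ (X_sub_C_ne_zero z))
    refine mul_left_cancel₀ hne ?_
    rw [← Polynomial.coe_mul, ← hder, hM, hN, pow_succ, Polynomial.coe_mul, Polynomial.coe_mul]
    ring
  have heval := eval_eq_zero_of_coe_eq_X_sub_C_mul hcancel
    (tendsto_pow_mul_coeff_mul N hρ he hlt)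
  have hprod : ((k : ℂ) + 1) * z * N.eval z = 0 := by simpa using heval
  exact mul_ne_zero (mul_ne_zero (Nat.cast_add_one_ne_zero k) hz0)
    (mt dvd_iff_isRoot.mpr hndvd) hprod

lemma norm_sum_one_div_zero_sub_le {ρ : ℝ} {s : Multiset ℂ} (hs : ∀ z ∈ s, 1 ≤ ‖z‖ * ρ) :
    ‖(s.map fun z => 1 / (0 - z)).sum‖ ≤ s.card * ρ := by
  have hterm : ∀ z ∈ s, ‖1 / (0 - z)‖ ≤ ρ := fun z hz => by
    have hpos : 0 < ‖z‖ := norm_pos_iff.mpr fun h => by simpa [h] using (hs z hz).trans_lt' one_pos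
    rw [zero_sub, norm_div, norm_neg, norm_one, div_le_iff₀ hpos, mul_comm]
    exact hs z hz
  calc ‖(s.map fun z => 1 / (0 - z)).sum‖
      ≤ ((s.map fun z => 1 / (0 - z)).map fun z => ‖z‖).sum := norm_multiset_sum_le _
    _ ≤ ((s.map fun z => 1 / (0 - z)).map fun z => ‖z‖).card • ρ :=
        Multiset.sum_le_card_nsmul _ _ (by simpa using hterm)
    _ = s.card * ρ := by rw [Multiset.card_map, Multiset.card_map, nsmul_eq_mul]

lemma norm_coeff_one_le_card_roots_mul {L : ℂ[X]} (h0 : L.coeff 0 = 1) {ρ : ℝ}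
    (hroots : ∀ z ∈ L.roots, 1 ≤ ‖z‖ * ρ) : ‖L.coeff 1‖ ≤ L.roots.card * ρ := by
  have heval : L.eval 0 = 1 := by rw [← coeff_zero_eq_eval_zero, h0]
  have hderiv : (derivative L).eval 0 = L.coeff 1 := by
    rw [← coeff_zero_eq_eval_zero, coeff_derivative]
    simp
  have hlog := (IsAlgClosed.splits L).eval_derivative_div_eval_of_ne_zero (x := 0)
    (by rw [heval]; exact one_ne_zero)
  rw [hderiv, heval, div_one] at hlog
  rw [hlog]
  exact norm_sum_one_div_zero_sub_le hroots

lemma coeff_comp_neg_X {R : Type*} [CommRing R] (p : R[X]) (n : ℕ) :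
    (p.comp (-X)).coeff n = (-1) ^ n * p.coeff n := by
  rw [← neg_one_mul, ← C_1, ← C_neg, comp_C_mul_X_coeff, mul_comm]

lemma coe_comp_neg_X {R : Type*} [CommRing R] (p : R[X]) :
    ((p.comp (-X) : R[X]) : PowerSeries R) = PowerSeries.evalNegHom (p : PowerSeries R) := by
  ext n
  rw [Polynomial.coeff_coe, coeff_comp_neg_X, PowerSeries.evalNegHom, PowerSeries.coeff_rescale,
    Polynomial.coeff_coe]

lemma coe_X_mul_derivative_comp_neg_X {R : Type*} [CommRing R] {p : R[X]} {s : PowerSeries R}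
    (hp : ((X * derivative p : R[X]) : PowerSeries R) = p * s) :
    ((X * derivative (p.comp (-X)) : R[X]) : PowerSeries R) =
      (p.comp (-X) : R[X]) * PowerSeries.evalNegHom s := by
  have hcomp : X * derivative (p.comp (-X)) = (X * derivative p).comp (-X) := by
    rw [derivative_comp, mul_comp, X_comp, derivative_neg, derivative_X]
    ring
  rw [hcomp, coe_comp_neg_X, hp, map_mul, coe_comp_neg_X]

lemma coe_X_mul_derivative_mul {R : Type*} [CommSemiring R] {p q : R[X]} {s t : PowerSeries R}
    (hp : ((X * derivative p : R[X]) : PowerSeries R) = p * s)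
    (hq : ((X * derivative q : R[X]) : PowerSeries R) = q * t) :
    ((X * derivative (p * q) : R[X]) : PowerSeries R) = (p * q : R[X]) * (s + t) := by
  have hmul : X * derivative (p * q) = X * derivative p * q + p * (X * derivative q) := by
    rw [derivative_mul]
    ring
  rw [hmul, Polynomial.coe_add, Polynomial.coe_mul _ q, Polynomial.coe_mul p (_ * _), hp, hq,
    Polynomial.coe_mul p q]
  ring

lemma norm_coeff_add_evalNegHom_le {s : PowerSeries ℂ} {c ρ : ℝ} (hρ : 0 < ρ)
    (hs : ∀ m, ‖PowerSeries.coeff (2 * m) s‖ ≤ c * ρ ^ (2 * m)) (n : ℕ) :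
    ‖PowerSeries.coeff n (s + PowerSeries.evalNegHom s)‖ ≤ 2 * c * ρ ^ n := by
  have hc : 0 ≤ c := by simpa using (norm_nonneg _).trans (hs 0)
  rw [map_add, PowerSeries.evalNegHom, PowerSeries.coeff_rescale]
  rcases Nat.even_or_odd' n with ⟨m, rfl | rfl⟩
  · rw [pow_mul, neg_one_sq, one_pow, one_mul, mul_assoc, two_mul (c * _)]
    exact (norm_add_le _ _).trans (add_le_add (hs m) (hs m))
  · rw [Odd.neg_one_pow ⟨m, rfl⟩, neg_one_mul, add_neg_cancel, norm_zero]
    positivity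

/-- `L * L(-X)` has the roots of `L` among its own, and its logarithmic derivative only involves
the coefficients of `s` of even index. -/
lemma one_le_norm_root_mul_of_even_coeff_le {L : ℂ[X]} {s : PowerSeries ℂ} {c ρ : ℝ} (hρ : 0 < ρ)
    (h0 : L.coeff 0 ≠ 0) (hL : ((X * derivative L : ℂ[X]) : PowerSeries ℂ) = L * s)
    (hs : ∀ m, ‖PowerSeries.coeff (2 * m) s‖ ≤ c * ρ ^ (2 * m)) {z : ℂ} (hz : L.IsRoot z) :
    1 ≤ ‖z‖ * ρ := by
  refine one_le_norm_root_mul_of_X_mul_derivative_eq hρ (norm_coeff_add_evalNegHom_le hρ hs) ?_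
    (coe_X_mul_derivative_mul hL (coe_X_mul_derivative_comp_neg_X hL))
    (root_mul_right_of_isRoot _ hz)
  rw [mul_coeff_zero, coeff_comp_neg_X, pow_zero, one_mul]
  exact mul_ne_zero h0 h0

lemma norm_coeff_one_le_natDegree_mul {L : ℂ[X]} {s : PowerSeries ℂ} {c ρ : ℝ} (hρ : 0 < ρ)
    (h0 : L.coeff 0 = 1) (hL : ((X * derivative L : ℂ[X]) : PowerSeries ℂ) = L * s)
    (hs : ∀ m, ‖PowerSeries.coeff (2 * m) s‖ ≤ c * ρ ^ (2 * m)) :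
    ‖L.coeff 1‖ ≤ L.natDegree * ρ := by
  refine (norm_coeff_one_le_card_roots_mul (ρ := ρ) h0 fun z hz => ?_).trans ?_
  · exact one_le_norm_root_mul_of_even_coeff_le hρ (h0.trans_ne one_ne_zero) hL hs
      (isRoot_of_mem_roots hz)
  · gcongr
    exact card_roots' L

end PowerSeriesRoots

section WeilBound

variable {F : Type*} [Field F] [Fintype F]

/-- The `L`-function of the character pair `χ`, `ψ`, truncated at degree `4`; nothing is lost when
`χ` or `ψ` is nontrivial and `U ≠ 0`, see `lCoeff_eq_zero`. -/
noncomputable def lPolynomial (χ : MulChar F ℂ) (ψ : AddChar F ℂ) (U V : F) : ℂ[X] :=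
  ∑ k ∈ Finset.range 5, monomial k (lCoeff χ ψ U V k)

lemma natDegree_lPolynomial_le (χ : MulChar F ℂ) (ψ : AddChar F ℂ) (U V : F) :
    (lPolynomial χ ψ U V).natDegree ≤ 4 :=
  natDegree_sum_le_of_forall_le _ _ fun _ hk =>
    (natDegree_monomial_le _).trans (Nat.le_of_lt_succ (Finset.mem_range.mp hk))

variable {χ : MulChar F ℂ} {ψ : AddChar F ℂ} {U : F}

lemma coeff_lPolynomial (hχψ : χ ≠ 1 ∨ ψ ≠ 1) (hU : U ≠ 0) (V : F) (k : ℕ) :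
    (lPolynomial χ ψ U V).coeff k = lCoeff χ ψ U V k := by
  rw [lPolynomial, finsetSum_coeff]
  simp only [coeff_monomial]
  rw [Finset.sum_ite_eq']
  split_ifs with hk
  · rfl
  · exact (lCoeff_eq_zero hχψ hU V (by simpa using hk)).symm

lemma coe_X_mul_derivative_lPolynomial (hχψ : χ ≠ 1 ∨ ψ ≠ 1) (hU : U ≠ 0) (V : F)
    {K : ℕ → Type*} [∀ i, Field (K i)] [∀ i, Fintype (K i)] [∀ i, Algebra F (K i)]
    (hK : ∀ i, Module.finrank F (K i) = i + 1) :
    ((X * derivative (lPolynomial χ ψ U V) : ℂ[X]) : PowerSeries ℂ) =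
      (lPolynomial χ ψ U V : PowerSeries ℂ) *
        (PowerSeries.X * PowerSeries.mk fun i => mixedCharSum F (K i) χ ψ U V) := by
  ext k
  rw [Polynomial.coeff_coe, coeff_X_mul_derivative, coeff_lPolynomial hχψ hU,
    natCast_mul_lCoeff χ ψ U V hK, mul_left_comm]
  cases k with
  | zero => simp
  | succ k =>
    rw [PowerSeries.coeff_succ_X_mul, mul_comm, PowerSeries.coeff_mul,
      Finset.Nat.sum_antidiagonal_eq_sum_range_succ_mk]
    refine Finset.sum_congr rfl fun i _ => ?_
    rw [PowerSeries.coeff_mk, Polynomial.coeff_coe, coeff_lPolynomial hχψ hU,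
      Nat.add_sub_add_right]

lemma norm_even_coeff_X_mul_mk_mixedCharSum_le (hχψ : χ ≠ 1 ∨ ψ ≠ 1) (hU : U ≠ 0) (V : F)
    {K : ℕ → Type*} [∀ i, Field (K i)] [∀ i, Fintype (K i)] [∀ i, Algebra F (K i)]
    (hK : ∀ i, Module.finrank F (K i) = i + 1) (m : ℕ) :
    ‖PowerSeries.coeff (2 * m)
        (PowerSeries.X * PowerSeries.mk fun i => mixedCharSum F (K i) χ ψ U V)‖ ≤
      (pointCountConst (Fintype.card F) + 3 + Fintype.card F ^ 2) *
        √(Fintype.card F) ^ (2 * m) := by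
  rw [pow_mul, Real.sq_sqrt (Nat.cast_nonneg _)]
  cases m with
  | zero =>
    rw [mul_zero, PowerSeries.coeff_zero_X_mul, norm_zero]
    positivity
  | succ m =>
    rw [Nat.mul_succ, PowerSeries.coeff_succ_X_mul, PowerSeries.coeff_mk]
    exact norm_mixedCharSum_le hχψ (by rw [hK]; ring) hU V

theorem norm_sum_mulChar_mul_addChar_le (hχψ : χ ≠ 1 ∨ ψ ≠ 1) (hU : U ≠ 0) (V : F) :
    ‖∑ x : F, χ (x + x⁻¹) * ψ (U * x + V * x⁻¹)‖ ≤ 4 * √(Fintype.card F) := by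
  obtain ⟨p, _⟩ := CharP.exists F
  have : Fact p.Prime := ⟨CharP.char_is_prime F p⟩
  let K (i : ℕ) := FiniteField.Extension F p (i + 1)
  have (i : ℕ) : Fintype (K i) := Fintype.ofFinite _
  have hK (i : ℕ) : Module.finrank F (K i) = i + 1 := FiniteField.finrank_extension F p (i + 1)
  have hcard : 0 < √(Fintype.card F : ℝ) := Real.sqrt_pos.mpr (Nat.cast_pos.mpr Fintype.card_pos)
  have hbound := norm_coeff_one_le_natDegree_mul hcard
    ((coeff_lPolynomial hχψ hU V 0).trans (lCoeff_zero χ ψ U V))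
    (coe_X_mul_derivative_lPolynomial hχψ hU V hK)
    (norm_even_coeff_X_mul_mk_mixedCharSum_le hχψ hU V hK)
  rw [coeff_lPolynomial hχψ hU, lCoeff_one] at hbound
  refine hbound.trans ?_
  gcongr
  exact_mod_cast natDegree_lPolynomial_le χ ψ U V

end WeilBound

/-! ### The character sieve -/

section CharacterSieve

lemma orderOf_dvd_of_prod_pow_eq_one {ι G : Type*} [Fintype ι] [CommGroup G] {g : ι → G}
    (hcop : Pairwise fun i j => (orderOf (g i)).Coprime (orderOf (g j))) {k : ι → ℕ}
    (hk : ∏ i, g i ^ k i = 1) (i : ι) : orderOf (g i) ∣ k i := by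
  classical
  let m := ∏ j ∈ Finset.univ.erase i, orderOf (g j)
  have hothers : ∏ j ∈ Finset.univ.erase i, (g j ^ k j) ^ m = 1 :=
    Finset.prod_eq_one fun j hj => by
      rw [← pow_mul, mul_comm, pow_mul,
        orderOf_dvd_iff_pow_eq_one.mp (Finset.dvd_prod_of_mem (fun j => orderOf (g j)) hj), one_pow]
  have hpow : g i ^ (k i * m) = 1 := by
    have hall := Finset.mul_prod_erase Finset.univ (fun j => (g j ^ k j) ^ m) (Finset.mem_univ i)
    rwa [hothers, mul_one, Finset.prod_pow, hk, one_pow, ← pow_mul] at hall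
  have hcoprime : (orderOf (g i)).Coprime m :=
    Nat.Coprime.prod_right fun j hj => hcop (Finset.ne_of_mem_erase hj).symm
  exact hcoprime.dvd_of_dvd_mul_right (orderOf_dvd_of_pow_eq_one hpow)

/-- The coefficient of `z ^ j` in `1 - m⁻¹ * ∑ i < m, z ^ i`, the polynomial of degree `< m` which
among the `m`-th roots of unity vanishes at `1` and equals `1` elsewhere. -/
noncomputable def sieveWeight (m j : ℕ) : ℝ :=
  (if j = 0 then 1 else 0) - (m : ℝ)⁻¹

lemma sum_sieveWeight_mul_pow {m : ℕ} (hm : 0 < m) {z : ℂ} (hz : z ^ m = 1) [Decidable (z = 1)] :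
    ∑ j ∈ Finset.range m, (sieveWeight m j : ℂ) * z ^ j = if z = 1 then 0 else 1 := by
  have hexpand : ∑ j ∈ Finset.range m, (sieveWeight m j : ℂ) * z ^ j =
      1 - (m : ℂ)⁻¹ * ∑ j ∈ Finset.range m, z ^ j := by
    simp only [sieveWeight, Complex.ofReal_sub, Complex.ofReal_inv, Complex.ofReal_natCast, sub_mul,
      Finset.sum_sub_distrib, ← Finset.mul_sum]
    simp [apply_ite Complex.ofReal, hm]
  rw [hexpand]
  split_ifs with h1
  · simp [h1, hm.ne']
  · have hgeom : (∑ j ∈ Finset.range m, z ^ j) * (z - 1) = 0 := by rw [geom_sum_mul, hz, sub_self]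
    rw [(mul_eq_zero.mp hgeom).resolve_right (sub_ne_zero.mpr h1), mul_zero, sub_zero]

lemma sum_abs_sieveWeight {m : ℕ} (hm : 0 < m) :
    ∑ j ∈ Finset.range m, |sieveWeight m j| = 2 * (1 - (m : ℝ)⁻¹) := by
  obtain ⟨k, rfl⟩ := Nat.exists_eq_add_one.mpr hm
  have hinv : ((k + 1 : ℕ) : ℝ)⁻¹ ≤ 1 := Nat.cast_inv_le_one _
  have hzero : |sieveWeight (k + 1) 0| = 1 - ((k + 1 : ℕ) : ℝ)⁻¹ := by
    rw [sieveWeight, if_pos rfl, abs_of_nonneg (sub_nonneg.mpr hinv)]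
  have hsucc (j : ℕ) : |sieveWeight (k + 1) (j + 1)| = ((k + 1 : ℕ) : ℝ)⁻¹ := by
    rw [sieveWeight, if_neg j.succ_ne_zero, zero_sub, abs_neg, abs_of_nonneg (by positivity)]
  rw [Finset.sum_range_succ']
  simp only [hzero, hsucc, Finset.sum_const, Finset.card_range, nsmul_eq_mul]
  push_cast
  field_simp
  ring

variable {ι E α : Type*} [Fintype ι] [Field E] {η : ι → MulChar E ℂ}

lemma prod_mulChar_pow_apply {y : E} (hy : y ≠ 0) (J : ι → ℕ) :
    (∏ i, η i ^ J i) y = ∏ i, η i y ^ J i := by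
  induction (Finset.univ : Finset ι) using Finset.cons_induction with
  | empty => exact MulChar.one_apply hy.isUnit
  | cons i s hi ih =>
    rw [Finset.prod_cons, Finset.prod_cons, MulChar.mul_apply, ih]
    exact congrArg (· * _) (MulChar.pow_apply_coe (η i) (J i) (Units.mk0 y hy))

open Classical in
lemma sum_mulChar_one_apply (s : Finset α) (f : α → E) :
    ∑ x ∈ s, (1 : MulChar E ℂ) (f x) = (s.filter fun x => f x ≠ 0).card := by
  rw [Finset.card_filter, Nat.cast_sum]
  refine Finset.sum_congr rfl fun x _ => ?_
  split_ifs with hx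
  · simp [MulChar.one_apply hx.isUnit]
  · simp [not_not.mp hx, MulChar.map_zero]

open Classical in
/-- The exponents `J` parametrizing the characters `∏ i, η i ^ J i`. -/
noncomputable def charExponents (η : ι → MulChar E ℂ) : Finset (ι → ℕ) :=
  Fintype.piFinset fun i => Finset.range (orderOf (η i))

lemma prod_pow_ne_one_of_mem_charExponents
    (hcop : Pairwise fun i j => (orderOf (η i)).Coprime (orderOf (η j))) {J : ι → ℕ}
    (hJ : J ∈ charExponents η) (hJ0 : J ≠ 0) : ∏ i, η i ^ J i ≠ 1 := by
  classical
  exact fun h => hJ0 <| funext fun i =>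
    Nat.eq_zero_of_dvd_of_lt (orderOf_dvd_of_prod_pow_eq_one hcop h i)
      (Finset.mem_range.mp (Fintype.mem_piFinset.mp hJ i))

/-- The coefficient of `∏ i, η i ^ J i` in the expansion into characters of the indicator function
of the nonzero elements on which no `η i` is `1`. -/
noncomputable def charWeight (η : ι → MulChar E ℂ) (J : ι → ℕ) : ℝ :=
  ∏ i, sieveWeight (orderOf (η i)) (J i)

/-- The proportion of nonzero elements on which no `η i` is `1`, for `η i` of coprime orders. -/
noncomputable def sieveDensity (η : ι → MulChar E ℂ) : ℝ :=
  ∏ i, (1 - (orderOf (η i) : ℝ)⁻¹)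

lemma sieveDensity_nonneg (η : ι → MulChar E ℂ) : 0 ≤ sieveDensity η :=
  Finset.prod_nonneg fun _ _ => sub_nonneg.mpr (Nat.cast_inv_le_one _)

lemma charWeight_zero (η : ι → MulChar E ℂ) : charWeight η 0 = sieveDensity η := by
  simp [charWeight, sieveDensity, sieveWeight]

variable [Finite E]

lemma zero_mem_charExponents (η : ι → MulChar E ℂ) : 0 ∈ charExponents η := by
  classical
  exact Fintype.mem_piFinset.mpr fun i => Finset.mem_range.mpr (η i).orderOf_pos

lemma sum_abs_charWeight (η : ι → MulChar E ℂ) :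
    ∑ J ∈ charExponents η, |charWeight η J| = 2 ^ Fintype.card ι * sieveDensity η := by
  classical
  simp only [charWeight, Finset.abs_prod]
  rw [charExponents, ← Finset.prod_univ_sum _ fun i j => |sieveWeight (orderOf (η i)) j|]
  simp only [sum_abs_sieveWeight (η _).orderOf_pos]
  rw [Finset.prod_mul_distrib, Finset.prod_const, Finset.card_univ, sieveDensity]

open Classical in
lemma sum_charWeight_mul_apply (η : ι → MulChar E ℂ) (y : E) :
    ∑ J ∈ charExponents η, (charWeight η J : ℂ) * (∏ i, η i ^ J i) y =
      if y ≠ 0 ∧ ∀ i, η i y ≠ 1 then 1 else 0 := by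
  rcases eq_or_ne y 0 with rfl | hy
  · simp [MulChar.map_zero]
  have hroot (i : ι) : η i y ^ orderOf (η i) = 1 := by
    rw [← MulChar.pow_apply' _ (η i).orderOf_pos.ne', pow_orderOf_eq_one,
      MulChar.one_apply hy.isUnit]
  calc ∑ J ∈ charExponents η, (charWeight η J : ℂ) * (∏ i, η i ^ J i) y
      = ∑ J ∈ charExponents η, ∏ i, (sieveWeight (orderOf (η i)) (J i) : ℂ) * η i y ^ J i := by
        refine Finset.sum_congr rfl fun J _ => ?_
        rw [prod_mulChar_pow_apply hy, charWeight, Complex.ofReal_prod, Finset.prod_mul_distrib]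
    _ = ∏ i, ∑ j ∈ Finset.range (orderOf (η i)),
          (sieveWeight (orderOf (η i)) j : ℂ) * η i y ^ j := by
        rw [Finset.prod_univ_sum, charExponents]
    _ = ∏ i, if η i y ≠ 1 then 1 else 0 := Finset.prod_congr rfl fun i _ => by
        rw [sum_sieveWeight_mul_pow (η i).orderOf_pos (hroot i), ite_not]
    _ = if y ≠ 0 ∧ ∀ i, η i y ≠ 1 then 1 else 0 := by
        rw [Finset.prod_ite_zero]
        simp [hy]

open Classical in
lemma card_filter_mulChar_ne_one_eq_sum (η : ι → MulChar E ℂ) (s : Finset α) (f : α → E) :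
    ((s.filter fun x => f x ≠ 0 ∧ ∀ i, η i (f x) ≠ 1).card : ℂ) =
      ∑ J ∈ charExponents η, (charWeight η J : ℂ) * ∑ x ∈ s, (∏ i, η i ^ J i) (f x) := by
  simp only [Finset.mul_sum]
  rw [Finset.sum_comm, Finset.card_filter, Nat.cast_sum]
  refine Finset.sum_congr rfl fun x _ => ?_
  rw [sum_charWeight_mul_apply, Nat.cast_ite, Nat.cast_one, Nat.cast_zero]

open Classical in
theorem abs_card_filter_mulChar_ne_one_sub_le
    (hcop : Pairwise fun i j => (orderOf (η i)).Coprime (orderOf (η j))) (s : Finset α)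
    (f : α → E) {B : ℝ} (hB : ∀ χ : MulChar E ℂ, χ ≠ 1 → ‖∑ x ∈ s, χ (f x)‖ ≤ B) :
    |((s.filter fun x => f x ≠ 0 ∧ ∀ i, η i (f x) ≠ 1).card : ℝ) -
        sieveDensity η * (s.filter fun x => f x ≠ 0).card| ≤
      sieveDensity η * (2 ^ Fintype.card ι - 1) * B := by
  have hsplit : ((s.filter fun x => f x ≠ 0 ∧ ∀ i, η i (f x) ≠ 1).card : ℂ) -
      sieveDensity η * (s.filter fun x => f x ≠ 0).card =
      ∑ J ∈ (charExponents η).erase 0, charWeight η J * ∑ x ∈ s, (∏ i, η i ^ J i) (f x) := by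
    rw [card_filter_mulChar_ne_one_eq_sum, ← Finset.add_sum_erase _ _ (zero_mem_charExponents η),
      charWeight_zero, ← sum_mulChar_one_apply]
    simp
  have hweights : ∑ J ∈ (charExponents η).erase 0, |charWeight η J| =
      sieveDensity η * (2 ^ Fintype.card ι - 1) := by
    have htotal := sum_abs_charWeight η
    rw [← Finset.add_sum_erase _ _ (zero_mem_charExponents η), charWeight_zero,
      abs_of_nonneg (sieveDensity_nonneg η)] at htotal
    linarith
  rw [← Real.norm_eq_abs, ← Complex.norm_real]
  push_cast
  rw [hsplit, ← hweights, Finset.sum_mul]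
  refine norm_sum_le_of_le _ fun J hJ => ?_
  rw [norm_mul, Complex.norm_real, Real.norm_eq_abs]
  gcongr
  exact hB _ (prod_pow_ne_one_of_mem_charExponents hcop (Finset.mem_of_mem_erase hJ)
    (Finset.ne_of_mem_erase hJ))

end CharacterSieve

/-! ### Elements with prescribed traces -/

section TraceFibers

variable {F E : Type*} [Field F] [Field E] [Fintype E] [Algebra F E]

open Classical in
/-- The set of `x` in `E` with `Tr x = a` and `Tr x⁻¹ = b`, out of which `Ncount` selects the `x`
with `x + x⁻¹` free. When `a = b = 0` it contains `0`, because `0⁻¹ = 0`. -/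
noncomputable def tracePairFiber (E : Type*) [Field E] [Fintype E] [Algebra F E] (a b : F) :
    Finset E :=
  Finset.univ.filter fun x => Algebra.trace F E x = a ∧ Algebra.trace F E x⁻¹ = b

open Classical in
lemma sum_addChar_trace_eq_ite [Fintype F] {ψ : AddChar F ℂ} (hψ : ψ.IsPrimitive) (a b : F)
    (x : E) :
    ∑ w : F × F, ψ (-(w.1 * a + w.2 * b)) * ψ (Algebra.trace F E (w.1 • x + w.2 • x⁻¹)) =
      if x ∈ tracePairFiber E a b then (Fintype.card F : ℂ) ^ 2 else 0 := by
  have hsplit (w : F × F) :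
      ψ (-(w.1 * a + w.2 * b)) * ψ (Algebra.trace F E (w.1 • x + w.2 • x⁻¹)) =
        ψ (w.1 * (Algebra.trace F E x - a)) * ψ (w.2 * (Algebra.trace F E x⁻¹ - b)) := by
    rw [← AddChar.map_add_eq_mul, ← AddChar.map_add_eq_mul, _root_.map_add (Algebra.trace F E),
      map_smul, map_smul, smul_eq_mul, smul_eq_mul]
    congr 1
    ring
  simp only [hsplit]
  rw [Fintype.sum_prod_type]
  dsimp only
  rw [← Finset.sum_mul_sum, AddChar.sum_mulShift _ hψ, AddChar.sum_mulShift _ hψ]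
  simp only [sub_eq_zero, tracePairFiber, Finset.mem_filter, Finset.mem_univ, true_and]
  split_ifs <;> simp_all [sq]

lemma card_sq_mul_sum_tracePairFiber [Fintype F] {ψ : AddChar F ℂ} (hψ : ψ.IsPrimitive) (a b : F)
    (g : E → ℂ) :
    (Fintype.card F : ℂ) ^ 2 * ∑ x ∈ tracePairFiber E a b, g x =
      ∑ w : F × F, ψ (-(w.1 * a + w.2 * b)) *
        ∑ x : E, g x * ψ (Algebra.trace F E (w.1 • x + w.2 • x⁻¹)) := by
  classical
  calc (Fintype.card F : ℂ) ^ 2 * ∑ x ∈ tracePairFiber E a b, g x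
      = ∑ x : E, g x * ∑ w : F × F,
          ψ (-(w.1 * a + w.2 * b)) * ψ (Algebra.trace F E (w.1 • x + w.2 • x⁻¹)) := by
        simp only [sum_addChar_trace_eq_ite hψ, mul_ite, mul_zero, Finset.sum_ite_mem,
          Finset.univ_inter, ← Finset.sum_mul]
        exact mul_comm _ _
    _ = _ := by
        simp only [Finset.mul_sum]
        rw [Finset.sum_comm]
        exact Finset.sum_congr rfl fun w _ => Finset.sum_congr rfl fun x _ => mul_left_comm _ _ _

lemma norm_sum_mulChar_mul_addChar_trace_le {ψ : AddChar F ℂ} (hψ : ψ ≠ 1) (χ : MulChar E ℂ)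
    {u v : F} (huv : u ≠ 0 ∨ v ≠ 0) :
    ‖∑ x : E, χ (x + x⁻¹) * ψ (Algebra.trace F E (u • x + v • x⁻¹))‖ ≤
      4 * √(Fintype.card E) := by
  wlog hu : u ≠ 0 generalizing u v
  · rw [← Equiv.sum_comp (Equiv.inv E)]
    simp only [Equiv.inv_apply, inv_inv, add_comm _⁻¹ _, add_comm (u • _⁻¹) _]
    exact this huv.symm (huv.resolve_left hu)
  have : Finite F := Finite.of_injective _ (algebraMap F E).injective
  have : Module.Finite F E := Module.Finite.of_finite
  let Ψ : AddChar E ℂ := ψ.compAddMonoidHom (Algebra.trace F E).toAddMonoidHom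
  have hΨ : Ψ ≠ 1 := by
    obtain ⟨c, hc⟩ := AddChar.ne_one_iff.mp hψ
    obtain ⟨x, rfl⟩ := Algebra.trace_surjective F E c
    exact AddChar.ne_one_iff.mpr ⟨x, hc⟩
  simp only [Algebra.smul_def]
  exact norm_sum_mulChar_mul_addChar_le (Or.inr hΨ)
    ((map_ne_zero (algebraMap F E)).mpr hu) (algebraMap F E v)

lemma norm_sum_mulChar_add_inv_le {χ : MulChar E ℂ} (hχ : χ ≠ 1) :
    ‖∑ x : E, χ (x + x⁻¹)‖ ≤ 4 * √(Fintype.card E) := by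
  simpa using norm_sum_mulChar_mul_addChar_le (ψ := (1 : AddChar E ℂ)) (Or.inl hχ) one_ne_zero 0

lemma norm_card_sq_mul_sum_tracePairFiber_sub_le [Fintype F] (χ : MulChar E ℂ) (a b : F) :
    ‖(Fintype.card F : ℂ) ^ 2 * ∑ x ∈ tracePairFiber E a b, χ (x + x⁻¹) -
        ∑ x : E, χ (x + x⁻¹)‖ ≤
      ((Fintype.card F : ℝ) ^ 2 - 1) * (4 * √(Fintype.card E)) := by
  classical
  obtain ⟨ψ, hψ⟩ : ∃ ψ : AddChar F ℂ, ψ.IsPrimitive :=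
    ⟨_, AddChar.FiniteField.primitiveChar_to_Complex_isPrimitive F⟩
  have hψ1 : ψ ≠ 1 := by simpa using hψ one_ne_zero
  have hcard : (((Finset.univ : Finset (F × F)).erase 0).card : ℝ) =
      (Fintype.card F : ℝ) ^ 2 - 1 := by
    rw [Finset.cast_card_erase_of_mem (Finset.mem_univ _), Finset.card_univ, Fintype.card_prod,
      Nat.cast_mul, sq]
  rw [card_sq_mul_sum_tracePairFiber hψ, ← Finset.add_sum_erase _ _ (Finset.mem_univ 0)]
  simp only [Prod.fst_zero, Prod.snd_zero, zero_mul, zero_smul, add_zero, neg_zero, map_zero,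
    AddChar.map_zero_eq_one, mul_one, one_mul, add_sub_cancel_left]
  rw [← hcard, ← nsmul_eq_mul]
  refine norm_sum_le_of_le _ (fun w hw => ?_) |>.trans_eq (Finset.sum_const _)
  rw [norm_mul, AddChar.norm_apply, one_mul]
  refine norm_sum_mulChar_mul_addChar_trace_le hψ1 χ ?_
  rw [← not_and_or]
  exact fun h => Finset.ne_of_mem_erase hw (Prod.ext h.1 h.2)

lemma norm_sum_mulChar_tracePairFiber_le {χ : MulChar E ℂ} (hχ : χ ≠ 1) (a b : F) :
    ‖∑ x ∈ tracePairFiber E a b, χ (x + x⁻¹)‖ ≤ 4 * √(Fintype.card E) := by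
  have : Finite F := Finite.of_injective _ (algebraMap F E).injective
  have : Fintype F := Fintype.ofFinite F
  have hF : (0 : ℝ) < (Fintype.card F : ℝ) ^ 2 := by positivity
  refine le_of_mul_le_mul_left ?_ hF
  calc (Fintype.card F : ℝ) ^ 2 * ‖∑ x ∈ tracePairFiber E a b, χ (x + x⁻¹)‖
      = ‖(Fintype.card F : ℂ) ^ 2 * ∑ x ∈ tracePairFiber E a b, χ (x + x⁻¹)‖ := by
        rw [norm_mul, norm_pow, Complex.norm_natCast]
    _ ≤ ((Fintype.card F : ℝ) ^ 2 - 1) * (4 * √(Fintype.card E)) + 4 * √(Fintype.card E) :=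
        (norm_le_norm_sub_add _ _).trans (add_le_add
          (norm_card_sq_mul_sum_tracePairFiber_sub_le χ a b) (norm_sum_mulChar_add_inv_le hχ))
    _ = (Fintype.card F : ℝ) ^ 2 * (4 * √(Fintype.card E)) := by ring

open Classical in
lemma card_div_sq_sub_le_card_tracePairFiber [Fintype F] (a b : F) :
    (Fintype.card E : ℝ) / (Fintype.card F : ℝ) ^ 2 - 4 * √(Fintype.card E) ≤
      ((tracePairFiber E a b).filter fun x => x + x⁻¹ ≠ 0).card := by
  have hsqrt : 1 ≤ √(Fintype.card E : ℝ) :=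
    Real.one_le_sqrt.mpr (mod_cast Fintype.card_pos)
  have hcompl : (Fintype.card E : ℝ) ≤
      (Finset.univ.filter fun x : E => x + x⁻¹ ≠ 0).card + 3 := by
    rw [← Finset.card_univ,
      ← Finset.card_filter_add_card_filter_not (p := fun x : E => x + x⁻¹ = 0)]
    push_cast
    linarith [(Nat.cast_le (α := ℝ)).mpr (card_add_inv_eq_zero_le (K := E))]
  have hdev := norm_card_sq_mul_sum_tracePairFiber_sub_le (1 : MulChar E ℂ) a b
  rw [sum_mulChar_one_apply, sum_mulChar_one_apply] at hdev
  have hdev_real : |(Fintype.card F : ℝ) ^ 2 *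
      ((tracePairFiber E a b).filter fun x => x + x⁻¹ ≠ 0).card -
        (Finset.univ.filter fun x : E => x + x⁻¹ ≠ 0).card| ≤
      ((Fintype.card F : ℝ) ^ 2 - 1) * (4 * √(Fintype.card E)) := by
    rw [← Real.norm_eq_abs, ← Complex.norm_real]
    push_cast
    exact hdev
  rw [sub_le_iff_le_add, div_le_iff₀ (by positivity)]
  linarith [(abs_le.mp hdev_real).1]

end TraceFibers

section FreeElements

lemma isFree_of_forall_mem_primeFactors {M : Type*} [Monoid M] {e : ℕ} (he : e ≠ 0) {y : M}
    (h : ∀ p ∈ e.primeFactors, ¬ ∃ β : M, β ^ p = y) : IsFree e y := by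
  rintro d hd ⟨β, rfl⟩
  by_contra hd1
  obtain ⟨p, hp, k, rfl⟩ := Nat.exists_prime_and_dvd hd1
  exact h p (Nat.mem_primeFactors.mpr ⟨hp, (Dvd.intro k rfl).trans hd, he⟩)
    ⟨β ^ k, by rw [← pow_mul, mul_comm]⟩

lemma totient_div_eq_prod {e : ℕ} (he : e ≠ 0) :
    (e.totient : ℝ) / e = ∏ p ∈ e.primeFactors, (1 - (p : ℝ)⁻¹) := by
  rw [div_eq_iff (mod_cast he), mul_comm]
  simpa using congrArg (fun x : ℚ => (x : ℝ)) (Nat.totient_eq_mul_prod_factors e)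

lemma not_exists_pow_orderOf_eq {M R : Type*} [CommMonoid M] [CommMonoidWithZero R]
    {η : MulChar M R} {y : M} (hy : IsUnit y) (hη : η y ≠ 1) : ¬ ∃ β : M, β ^ orderOf η = y := by
  rintro ⟨β, rfl⟩
  rcases eq_or_ne (orderOf η) 0 with h0 | h0
  · exact hη (by rw [h0, pow_zero, map_one])
  · obtain ⟨β, rfl⟩ := (isUnit_pow_iff h0).mp hy
    exact hη (by rw [map_pow, ← MulChar.pow_apply_coe, pow_orderOf_eq_one, MulChar.one_apply_coe])

lemma exists_mulChar_orderOf_eq_primeFactors {E : Type*} [Field E] [Fintype E] {e : ℕ}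
    (he : e ∣ Fintype.card E - 1) :
    ∃ η : e.primeFactors → MulChar E ℂ, ∀ p, orderOf (η p) = p := by
  have hexists (p : e.primeFactors) : ∃ χ : MulChar E ℂ, orderOf χ = p :=
    MulChar.exists_mulChar_orderOf E ((Nat.dvd_of_mem_primeFactors p.2).trans he)
      (Complex.isPrimitiveRoot_exp p (Nat.prime_of_mem_primeFactors p.2).ne_zero)
  exact ⟨fun p => (hexists p).choose, fun p => (hexists p).choose_spec⟩

variable {E : Type*} [Field E] {e : ℕ} {η : e.primeFactors → MulChar E ℂ}

lemma sieveDensity_eq_totient_div (he : e ≠ 0) (hη : ∀ p, orderOf (η p) = p) :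
    sieveDensity η = e.totient / e := by
  simp only [sieveDensity, hη]
  rw [totient_div_eq_prod he]
  exact Finset.prod_coe_sort e.primeFactors fun p => 1 - (p : ℝ)⁻¹

lemma pairwise_coprime_orderOf (hη : ∀ p, orderOf (η p) = p) :
    Pairwise fun i j => (orderOf (η i)).Coprime (orderOf (η j)) := by
  intro i j hij
  rw [hη, hη, Nat.coprime_primes (Nat.prime_of_mem_primeFactors i.2)
    (Nat.prime_of_mem_primeFactors j.2)]
  exact Subtype.coe_ne_coe.mpr hij

lemma isFree_of_forall_mulChar_ne_one (he : e ≠ 0) (hη : ∀ p, orderOf (η p) = p) {y : E}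
    (hy : y ≠ 0) (h : ∀ p, η p y ≠ 1) : IsFree e y :=
  isFree_of_forall_mem_primeFactors he fun p hp => by
    simpa only [hη ⟨p, hp⟩] using not_exists_pow_orderOf_eq hy.isUnit (h ⟨p, hp⟩)

open Classical in
lemma card_filter_isFree_le_Ncount {F : Type*} [Field F] [Fintype E] [Algebra F E] (a b : F) :
    ((tracePairFiber E a b).filter fun x => x + x⁻¹ ≠ 0 ∧ IsFree e (x + x⁻¹)).card ≤
      Ncount F E a b e := by
  rw [Ncount, Nat.card_eq_fintype_card, Fintype.card_subtype]
  refine Finset.card_le_card fun x hx => ?_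
  simp only [tracePairFiber, Finset.mem_filter, Finset.mem_univ, true_and] at hx ⊢
  obtain ⟨⟨hxa, hxb⟩, hx0, hfree⟩ := hx
  exact ⟨by rintro rfl; simp at hx0, hxa, hxb, hfree⟩

end FreeElements

theorem totient_div_mul_le_Ncount {F E : Type*} [Field F] [Fintype F] [Field E] [Fintype E]
    [Algebra F E] (a b : F) {e : ℕ} (he : e ∣ Fintype.card E - 1) :
    (e.totient : ℝ) / e * ((Fintype.card E : ℝ) / (Fintype.card F : ℝ) ^ 2 -
      2 ^ e.primeFactors.card * (4 * √(Fintype.card E))) ≤ Ncount F E a b e := by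
  classical
  have he0 : e ≠ 0 :=
    ne_zero_of_dvd_ne_zero (Nat.sub_pos_of_lt Fintype.one_lt_card).ne' he
  obtain ⟨η, hη⟩ := exists_mulChar_orderOf_eq_primeFactors he
  have hsieve := abs_card_filter_mulChar_ne_one_sub_le (pairwise_coprime_orderOf hη)
    (tracePairFiber E a b) (fun x => x + x⁻¹)
    fun _ hχ => norm_sum_mulChar_tracePairFiber_le hχ a b
  rw [Fintype.card_coe] at hsieve
  have hcount : (((tracePairFiber E a b).filter fun x =>
      x + x⁻¹ ≠ 0 ∧ ∀ p, η p (x + x⁻¹) ≠ 1).card : ℝ) ≤ Ncount F E a b e := by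
    refine mod_cast (Finset.card_le_card ?_).trans (card_filter_isFree_le_Ncount a b)
    exact Finset.monotone_filter_right _ fun x _ ⟨hx0, hx⟩ =>
      ⟨hx0, isFree_of_forall_mulChar_ne_one he0 hη hx0 hx⟩
  have hfiber := mul_le_mul_of_nonneg_left (card_div_sq_sub_le_card_tracePairFiber (E := E) a b)
    (sieveDensity_nonneg η)
  rw [← sieveDensity_eq_totient_div he0 hη]
  linarith [(abs_le.mp hsieve).1]

lemma sqrt_pow_eq_rpow {x : ℝ} (hx : 0 ≤ x) (n : ℕ) : √(x ^ n) = x ^ ((n : ℝ) / 2) := by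
  rw [Real.sqrt_eq_rpow, ← Real.rpow_natCast, ← Real.rpow_mul hx, mul_one_div]

lemma rpow_half_mul_rpow_half_sub_two {x : ℝ} (hx : 0 < x) (n : ℕ) :
    x ^ ((n : ℝ) / 2) * x ^ ((n : ℝ) / 2 - 2) = x ^ n / x ^ 2 := by
  rw [← Real.rpow_add hx, ← add_sub_assoc, add_halves, Real.rpow_sub hx, Real.rpow_natCast,
    Real.rpow_two]

/-- Lower bound for `N_e(a,b)`:
`N_e ≥ θ(e) q^(n/2) (q^(n/2-2) - 2^(ω(e)+2))` where `θ(e) = φ(e)/e`. -/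
theorem stmt3 (q n : ℕ) (hq : IsPrimePow q) (hn : 0 < n)
    (F E : Type*) [Field F] [Fintype F] [Field E] [Fintype E] [Algebra F E]
    (hF : Fintype.card F = q) (hE : Fintype.card E = q ^ n)
    (a b : F) (e : ℕ) (he : e ∣ q ^ n - 1) :
    (Ncount F E a b e : ℝ) ≥
      ((e.totient : ℝ) / e) * (q : ℝ) ^ ((n : ℝ) / 2) *
        ((q : ℝ) ^ ((n : ℝ) / 2 - 2) - 2 ^ (e.primeFactors.card + 2)) := by
  have hq0 : (0 : ℝ) < q := mod_cast hq.pos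
  have hbound := totient_div_mul_le_Ncount (E := E) a b (e := e) (by rwa [hE])
  rw [hE, hF, Nat.cast_pow, sqrt_pow_eq_rpow hq0.le, ← rpow_half_mul_rpow_half_sub_two hq0]
    at hbound
  refine le_of_eq_of_le ?_ hbound
  ring
end
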